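/- arXiv:0906.1057 — 12 statements merged into one kernel-verified Lean document; each statement's English description precedes it below -/
import Mathlib

section
/- Let K be a field and q ∈ K nonzero with q⁴ ≠ −1 and 2_q := q + q⁻¹ ≠ 0. Set w = (q²+1)/(q⁴+1). Then the 2×2 matrices H = w·diag(q, −q⁻¹), B = w·q⁻¹·E₁₂, C = w·q·E₂₁ satisfy the SL(R_q,ℏ) relations with ℏ = 1: q²HB − BH = 2_q·B; q²CH − HC = 2_q·C; 2_q·q(BC − CB) + (q²−1)H² = 2_q·H. -/
/-!
A matrix unit is an eigenvector of left and right multiplication by a diagonal matrix, so the first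
two relations reduce to the single scalar equation `q² H₁₁ - H₂₂ = q + q⁻¹`. The commutator of two
opposite matrix units is diagonal, so the third relation reduces to one scalar equation for each
diagonal entry of `H`. All of these equations follow from `w (q⁴ + 1) = q² + 1`.
-/

open Matrix

section MatrixUnits

variable {m n R : Type*} [DecidableEq m] [DecidableEq n]

theorem diagonal_mul_single [Fintype m] [NonUnitalNonAssocSemiring R]
    (d : m → R) (i : m) (j : n) (x : R) :
    diagonal d * single i j x = d i • single i j x := by
  ext k l
  obtain rfl | hk := eq_or_ne i k <;> simp [*]

theorem single_mul_diagonal [Fintype n] [NonUnitalCommSemiring R]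
    (d : n → R) (i : m) (j : n) (x : R) :
    single i j x * diagonal d = d j • single i j x := by
  ext k l
  obtain rfl | hl := eq_or_ne j l <;> simp [*, mul_comm]

theorem single_mul_single_sub_single_mul_single_swap [Fintype n] [NonUnitalCommRing R]
    (i j : n) (x y : R) :
    single i j x * single j i y - single j i y * single i j x =
      diagonal (Pi.single i (x * y) - Pi.single j (x * y)) := by
  rw [single_mul_single_same, single_mul_single_same, mul_comm y x, ← diagonal_single,
    ← diagonal_single, diagonal_sub, Pi.sub_def]

end MatrixUnits

theorem smul_single_commutator_add_smul_diagonal_sq {R : Type*} [CommRing R]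
    {s t u a d x y : R} (ha : s * (x * y) + t * a ^ 2 = u * a)
    (hd : -(s * (x * y)) + t * d ^ 2 = u * d) :
    s • (single 0 1 x * single 1 0 y - single 1 0 y * single 0 1 x) +
      t • (diagonal ![a, d] * diagonal ![a, d]) = u • diagonal ![a, d] := by
  rw [single_mul_single_sub_single_mul_single_swap, diagonal_mul_diagonal, ← diagonal_smul,
    ← diagonal_smul, ← diagonal_smul, diagonal_add]
  congr 1
  ext k
  fin_cases k
  · simpa [sq] using ha
  · simpa [sq] using hd

section ScalarEquations

variable {K : Type*} [Field K] {q w : K}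

theorem sq_mul_sub_eq_add_inv (hq : q ≠ 0) (hw : w * (q ^ 4 + 1) = q ^ 2 + 1) :
    q ^ 2 * (w * q) - -(w * q⁻¹) = q + q⁻¹ := by
  field_simp
  linear_combination hw

theorem cartan_relation_entry_zero (hq : q ≠ 0) (hw : w * (q ^ 4 + 1) = q ^ 2 + 1) :
    (q + q⁻¹) * q * (w * q⁻¹ * (w * q)) + (q ^ 2 - 1) * (w * q) ^ 2 =
      (q + q⁻¹) * (w * q) := by
  field_simp
  linear_combination w * hw

theorem cartan_relation_entry_one (hq : q ≠ 0) (hw : w * (q ^ 4 + 1) = q ^ 2 + 1) :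
    -((q + q⁻¹) * q * (w * q⁻¹ * (w * q))) + (q ^ 2 - 1) * (-(w * q⁻¹)) ^ 2 =
      (q + q⁻¹) * -(w * q⁻¹) := by
  field_simp
  linear_combination -w * hw

end ScalarEquations

/-- The sl-reduction of the fundamental representation of the mREA: the stated
2×2 matrices satisfy the `SL(R_q,ℏ)` relations with `ℏ = 1`. -/
theorem stmt_3 (K : Type*) [Field K] (q : K) (hq : q ≠ 0)
    (hq4 : q ^ 4 ≠ -1) (h2q : q + q⁻¹ ≠ 0)
    (w : K) (hw : w = (q ^ 2 + 1) / (q ^ 4 + 1))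
    (H B C : Matrix (Fin 2) (Fin 2) K)
    (hH : H = w • !![q, 0; 0, -q⁻¹])
    (hB : B = w • !![0, q⁻¹; 0, 0])
    (hC : C = w • !![0, 0; q, 0]) :
    q ^ 2 • (H * B) - B * H = (q + q⁻¹) • B ∧
    q ^ 2 • (C * H) - H * C = (q + q⁻¹) • C ∧
    ((q + q⁻¹) * q) • (B * C - C * B) + (q ^ 2 - 1) • (H * H) = (q + q⁻¹) • H := by
  have hw' : w * (q ^ 4 + 1) = q ^ 2 + 1 :=
    (eq_div_iff fun h => hq4 (eq_neg_of_add_eq_zero_left h)).mp hw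
  have hH' : H = diagonal ![w * q, -(w * q⁻¹)] := by simp [hH, ← Matrix.ext_iff]
  have hB' : B = single 0 1 (w * q⁻¹) := by simp [hB, ← Matrix.ext_iff]
  have hC' : C = single 1 0 (w * q) := by simp [hC, ← Matrix.ext_iff]
  have weight := sq_mul_sub_eq_add_inv hq hw'
  rw [hH', hB', hC']
  refine ⟨?_, ?_, smul_single_commutator_add_smul_diagonal_sq
    (cartan_relation_entry_zero hq hw') (cartan_relation_entry_one hq hw')⟩
  · rw [diagonal_mul_single, single_mul_diagonal, smul_smul, ← sub_smul]
    exact congrArg (· • _) weight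
  · rw [diagonal_mul_single, single_mul_diagonal, smul_smul, ← sub_smul]
    exact congrArg (· • _) weight
end

section
/- Let K be a field, q ∈ K nonzero, ℏ ∈ K, and let A be a unital associative K-algebra containing elements a,b,c,d satisfying the modified reflection equation algebra relations with parameter ℏ. Then the elements ℓ = q⁻¹a + qd and Cas = q⁻¹a² + q⁻¹bc + q·cb + q·d² commute with each of a, b, c, d. -/
/-!
Call `(x, x')` an intertwining pair for `b` and `c` if `b x = x' b` and `x c = c x'`. Intertwining
pairs form a subalgebra of `A × A` which always contains `(cb, bc)`; moreover `(z, z)` is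
intertwining iff `z` commutes with `b` and `c`, and `cb` commutes with the first entry of every
pair. The relations of the modified reflection equation algebra say precisely that `a` and `d`
commute, that they are the first entries of intertwining pairs `(a, a')` and `(d, d')` with `a'`
and `d'` affine in `a` and `d`, and that `bc - cb` is a polynomial in `a` and `d`. Hence `ℓ` and
`Cas = (q + q⁻¹) cb + g(a, d)` commute with `a` and `d`. Evaluating the same expressions on the
pairs gives `(ℓ, ℓ)` and `(Cas, Cas)`, so `ℓ` and `Cas` commute with `b` and `c` too.
-/

section Intertwining

variable (K : Type*) {A : Type*} [CommSemiring K] [Semiring A] [Algebra K A]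

/-- The algebra of intertwining pairs `(x, x')` for `b` and `c`: moving `b` from the left of `x` to
its right, or `c` from the right of `x` to its left, replaces `x` by `x'`. -/
def intertwiningPairs (b c : A) : Subalgebra K (A × A) where
  carrier := {x | b * x.1 = x.2 * b ∧ x.1 * c = c * x.2}
  add_mem' := by
    rintro x y ⟨hbx, hxc⟩ ⟨hby, hyc⟩
    exact ⟨by simp only [Prod.fst_add, Prod.snd_add, mul_add, add_mul, hbx, hby],
      by simp only [Prod.fst_add, Prod.snd_add, mul_add, add_mul, hxc, hyc]⟩
  mul_mem' := by
    rintro x y ⟨hbx, hxc⟩ ⟨hby, hyc⟩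
    exact ⟨by rw [Prod.fst_mul, Prod.snd_mul, ← mul_assoc, hbx, mul_assoc, hby, mul_assoc],
      by rw [Prod.fst_mul, Prod.snd_mul, mul_assoc, hyc, ← mul_assoc, hxc, mul_assoc]⟩
  algebraMap_mem' r := ⟨(Algebra.commutes r b).symm, Algebra.commutes r c⟩

variable {K} {b c : A}

theorem mem_intertwiningPairs {x : A × A} :
    x ∈ intertwiningPairs K b c ↔ b * x.1 = x.2 * b ∧ x.1 * c = c * x.2 :=
  Iff.rfl

theorem mk_self_mem_intertwiningPairs {z : A} :
    (z, z) ∈ intertwiningPairs K b c ↔ Commute z b ∧ Commute z c :=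
  and_congr_left' eq_comm

variable (K b c) in
theorem mul_swap_mem_intertwiningPairs : (c * b, b * c) ∈ intertwiningPairs K b c :=
  ⟨(mul_assoc b c b).symm, mul_assoc c b c⟩

theorem commute_mul_fst_of_mem_intertwiningPairs {x : A × A}
    (hx : x ∈ intertwiningPairs K b c) : Commute (c * b) x.1 := by
  obtain ⟨hbx, hxc⟩ := hx
  calc c * b * x.1 = c * x.2 * b := by rw [mul_assoc, hbx, mul_assoc]
    _ = x.1 * (c * b) := by rw [← hxc, mul_assoc]

theorem commute_of_mem_centralizer_of_mk_self_mem {a d z : A}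
    (had : z ∈ Subalgebra.centralizer K {a, d}) (hbc : (z, z) ∈ intertwiningPairs K b c) :
    ∀ x ∈ ({a, b, c, d} : Set A), Commute z x := by
  obtain ⟨hb, hc⟩ := mk_self_mem_intertwiningPairs.mp hbc
  rintro x (rfl | rfl | rfl | rfl)
  · exact (had x (by simp)).symm
  · exact hb
  · exact hc
  · exact (had x (by simp)).symm

end Intertwining

section ModifiedREA

variable {K A : Type*} [CommRing K] [Ring A] [Algebra K A]

/-- The relations of the modified reflection equation algebra `𝓛(R_q,ℏ)` in the standard `SL(2)`
case, over any commutative ring in which `q` is invertible. -/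
structure IsModifiedREA (q : Kˣ) (ℏ : K) (a b c d : A) : Prop where
  rel_ab : (q : K) • (a * b) - (↑q⁻¹ : K) • (b * a) = ℏ • b
  rel_ca : (q : K) • (c * a) - (↑q⁻¹ : K) • (a * c) = ℏ • c
  rel_ad : a * d - d * a = 0
  rel_bc : (q : K) • (b * c - c * b) - ((q : K) - ↑q⁻¹) • (a * (d - a)) = ℏ • (a - d)
  rel_cd : (q : K) • (c * d - d * c) - ((q : K) - ↑q⁻¹) • (c * a) = -(ℏ • c)
  rel_db : (q : K) • (d * b - b * d) - ((q : K) - ↑q⁻¹) • (a * b) = -(ℏ • b)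

/-- The element `ℓ`, which is the quantum trace of `L = (a b; c d)` up to the factor `q²`. -/
def quantumTrace (q : Kˣ) (a d : A) : A :=
  (↑q⁻¹ : K) • a + (q : K) • d

/-- The quadratic q-Casimir element `Cas = q² Tr_q(L²)` of `L = (a b; c d)`. -/
def qCasimir (q : Kˣ) (a b c d : A) : A :=
  (↑q⁻¹ : K) • (a * a) + (↑q⁻¹ : K) • (b * c) + (q : K) • (c * b) + (q : K) • (d * d)

/-- The intertwining partner `a'` of `a`: in the modified reflection equation algebra `b a = a' b`
and `a c = c a'`. -/
def twistA (q : Kˣ) (ℏ : K) (a : A) : A :=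
  (q ^ 2 : K) • a - (q * ℏ : K) • 1

/-- The intertwining partner `d'` of `d`: in the modified reflection equation algebra `b d = d' b`
and `d c = c d'`. -/
def twistD (q : Kˣ) (ℏ : K) (a d : A) : A :=
  d - (1 - ↑q⁻¹ ^ 2 : K) • a + (↑q⁻¹ * ℏ : K) • 1

/-- The commutator `bc - cb` in the modified reflection equation algebra, as a polynomial in `a`
and `d`. -/
def commutatorPoly (q : Kˣ) (ℏ : K) (a d : A) : A :=
  (1 - ↑q⁻¹ ^ 2 : K) • (a * (d - a)) + (↑q⁻¹ * ℏ : K) • (a - d)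

/-- The polynomial `g(a, d)` in the decomposition `Cas = (q + q⁻¹) cb + g(a, d)`. -/
def casimirPoly (q : Kˣ) (ℏ : K) (a d : A) : A :=
  (↑q⁻¹ : K) • (a * a) + (q : K) • (d * d) + (↑q⁻¹ : K) • commutatorPoly q ℏ a d

section Polynomials

variable {q : Kˣ} {ℏ : K} {a d : A}

theorem quantumTrace_mem {S : Subalgebra K A} (ha : a ∈ S) (hd : d ∈ S) :
    quantumTrace q a d ∈ S :=
  add_mem (S.smul_mem ha _) (S.smul_mem hd _)

theorem casimirPoly_mem {S : Subalgebra K A} (ha : a ∈ S) (hd : d ∈ S) :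
    casimirPoly q ℏ a d ∈ S :=
  add_mem (add_mem (S.smul_mem (mul_mem ha ha) _) (S.smul_mem (mul_mem hd hd) _)) <|
    S.smul_mem (add_mem (S.smul_mem (mul_mem ha (sub_mem hd ha)) _)
      (S.smul_mem (sub_mem ha hd) _)) _

theorem quantumTrace_twist :
    quantumTrace q (twistA q ℏ a) (twistD q ℏ a d) = quantumTrace q a d := by
  have hq : (q : K) * ↑q⁻¹ = 1 := q.mul_inv
  unfold quantumTrace twistA twistD
  match_scalars <;> grind

theorem casimirPoly_twist_add (had : Commute a d) :
    casimirPoly q ℏ (twistA q ℏ a) (twistD q ℏ a d) +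
      ((q : K) + ↑q⁻¹) • commutatorPoly q ℏ a d = casimirPoly q ℏ a d := by
  have hq : (q : K) * ↑q⁻¹ = 1 := q.mul_inv
  simp only [casimirPoly, commutatorPoly, twistA, twistD, mul_add, add_mul, mul_sub, sub_mul,
    smul_mul_assoc, mul_smul_comm, mul_one, one_mul, had.eq]
  match_scalars <;> grind

end Polynomials

namespace IsModifiedREA

variable {q : Kˣ} {ℏ : K} {a b c d : A}

theorem commute_ad (h : IsModifiedREA q ℏ a b c d) : Commute a d :=
  sub_eq_zero.mp h.rel_ad

theorem mk_twistA_mem (h : IsModifiedREA q ℏ a b c d) :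
    (a, twistA q ℏ a) ∈ intertwiningPairs K b c := by
  have hq : (q : K) * ↑q⁻¹ = 1 := q.mul_inv
  rw [mem_intertwiningPairs]
  simp only [twistA, sub_mul, mul_sub, smul_mul_assoc, mul_smul_comm, one_mul, mul_one]
  constructor
  · rw [mul_smul (q : K) ℏ, ← h.rel_ab]
    match_scalars <;> grind
  · rw [mul_smul (q : K) ℏ, ← h.rel_ca]
    match_scalars <;> grind

theorem mk_twistD_mem (h : IsModifiedREA q ℏ a b c d) :
    (d, twistD q ℏ a d) ∈ intertwiningPairs K b c := by
  have hq : (q : K) * ↑q⁻¹ = 1 := q.mul_inv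
  rw [mem_intertwiningPairs]
  simp only [twistD, add_mul, mul_add, sub_mul, mul_sub, smul_mul_assoc, mul_smul_comm, one_mul,
    mul_one]
  constructor
  · rw [mul_smul (↑q⁻¹ : K) ℏ, ← neg_eq_iff_eq_neg.mpr h.rel_db]
    match_scalars <;> grind
  · rw [mul_smul (↑q⁻¹ : K) ℏ, ← neg_eq_iff_eq_neg.mpr h.rel_cd]
    match_scalars <;> grind

theorem mul_bc_eq (h : IsModifiedREA q ℏ a b c d) :
    b * c = c * b + commutatorPoly q ℏ a d := by
  have hq : (q : K) * ↑q⁻¹ = 1 := q.mul_inv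
  rw [commutatorPoly, mul_smul (↑q⁻¹ : K) ℏ, ← h.rel_bc]
  match_scalars <;> grind

theorem qCasimir_eq_smul_cb_add (h : IsModifiedREA q ℏ a b c d) :
    qCasimir q a b c d = ((q : K) + ↑q⁻¹) • (c * b) + casimirPoly q ℏ a d := by
  rw [qCasimir, casimirPoly, h.mul_bc_eq]
  module

theorem qCasimir_eq_smul_bc_add (h : IsModifiedREA q ℏ a b c d) :
    qCasimir q a b c d =
      ((q : K) + ↑q⁻¹) • (b * c) + casimirPoly q ℏ (twistA q ℏ a) (twistD q ℏ a d) := by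
  rw [h.qCasimir_eq_smul_cb_add, h.mul_bc_eq, ← casimirPoly_twist_add h.commute_ad]
  module

theorem quantumTrace_mk_self_mem (h : IsModifiedREA q ℏ a b c d) :
    (quantumTrace q a d, quantumTrace q a d) ∈ intertwiningPairs K b c := by
  have hpair : quantumTrace q (a, twistA q ℏ a) (d, twistD q ℏ a d) =
      (quantumTrace q a d, quantumTrace q a d) :=
    Prod.ext rfl quantumTrace_twist
  exact hpair ▸ quantumTrace_mem h.mk_twistA_mem h.mk_twistD_mem

theorem qCasimir_mk_self_mem (h : IsModifiedREA q ℏ a b c d) :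
    (qCasimir q a b c d, qCasimir q a b c d) ∈ intertwiningPairs K b c := by
  have hpair : ((q : K) + ↑q⁻¹) • (c * b, b * c) +
      casimirPoly q ℏ (a, twistA q ℏ a) (d, twistD q ℏ a d) =
        (qCasimir q a b c d, qCasimir q a b c d) :=
    Prod.ext h.qCasimir_eq_smul_cb_add.symm h.qCasimir_eq_smul_bc_add.symm
  exact hpair ▸ add_mem (Subalgebra.smul_mem _ (mul_swap_mem_intertwiningPairs K b c) _)
    (casimirPoly_mem h.mk_twistA_mem h.mk_twistD_mem)

theorem quantumTrace_mem_centralizer (h : IsModifiedREA q ℏ a b c d) :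
    quantumTrace q a d ∈ Subalgebra.centralizer K {a, d} := by
  apply quantumTrace_mem <;>
    simp [Subalgebra.mem_centralizer_iff, h.commute_ad.eq]

theorem qCasimir_mem_centralizer (h : IsModifiedREA q ℏ a b c d) :
    qCasimir q a b c d ∈ Subalgebra.centralizer K {a, d} := by
  have hcb : c * b ∈ Subalgebra.centralizer K {a, d} := by
    rintro x (rfl | rfl)
    · exact (commute_mul_fst_of_mem_intertwiningPairs h.mk_twistA_mem).symm
    · exact (commute_mul_fst_of_mem_intertwiningPairs h.mk_twistD_mem).symm
  rw [h.qCasimir_eq_smul_cb_add]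
  refine add_mem (Subalgebra.smul_mem _ hcb _) (casimirPoly_mem ?_ ?_) <;>
    simp [Subalgebra.mem_centralizer_iff, h.commute_ad.eq]

end IsModifiedREA

theorem stmt_4_general {q : Kˣ} {ℏ : K} {a b c d : A} (h : IsModifiedREA q ℏ a b c d) :
    (∀ x ∈ ({a, b, c, d} : Set A), Commute (quantumTrace q a d) x) ∧
      ∀ x ∈ ({a, b, c, d} : Set A), Commute (qCasimir q a b c d) x :=
  ⟨commute_of_mem_centralizer_of_mk_self_mem h.quantumTrace_mem_centralizer
      h.quantumTrace_mk_self_mem,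
    commute_of_mem_centralizer_of_mk_self_mem h.qCasimir_mem_centralizer h.qCasimir_mk_self_mem⟩

end ModifiedREA

/-- In any unital associative algebra whose elements `a,b,c,d` satisfy the relations
of the modified reflection equation algebra `𝓛(R_q,ℏ)` (standard `SL(2)` case), the
quantum trace `ℓ = q⁻¹a + qd` and the q-Casimir `Cas = q⁻¹a² + q⁻¹bc + q·cb + q·d²`
commute with each of `a,b,c,d`. -/
theorem stmt_4 (K : Type*) [Field K] (A : Type*) [Ring A] [Algebra K A]
    (q ℏ : K) (hq : q ≠ 0) (a b c d : A)
    (r1 : q • (a * b) - q⁻¹ • (b * a) = ℏ • b)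
    (r2 : q • (c * a) - q⁻¹ • (a * c) = ℏ • c)
    (r3 : a * d - d * a = 0)
    (r4 : q • (b * c - c * b) - (q - q⁻¹) • (a * (d - a)) = ℏ • (a - d))
    (r5 : q • (c * d - d * c) - (q - q⁻¹) • (c * a) = -(ℏ • c))
    (r6 : q • (d * b - b * d) - (q - q⁻¹) • (a * b) = -(ℏ • b)) :
    (∀ x ∈ ({a, b, c, d} : Set A),
      (q⁻¹ • a + q • d) * x = x * (q⁻¹ • a + q • d)) ∧
    (∀ x ∈ ({a, b, c, d} : Set A),
      (q⁻¹ • (a * a) + q⁻¹ • (b * c) + q • (c * b) + q • (d * d)) * x =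
        x * (q⁻¹ • (a * a) + q⁻¹ • (b * c) + q • (c * b) + q • (d * d))) :=
  stmt_4_general (q := Units.mk0 q hq) ⟨r1, r2, r3, r4, r5, r6⟩
end

section
/- Let K be a field, q ∈ K nonzero with 2_q := q + q⁻¹ ≠ 0, ℏ ∈ K, and let A be a unital associative K-algebra containing elements b,h,c satisfying the SL(R_q,ℏ) relations. Then the element Cas_sl = q⁻¹bc + h²/2_q + q·cb commutes with each of b, h, c. -/
/-!
Put `p = q²`, `s = 2_q ℏ`, `r = 2_q q` and `k = p h - s`. The first two relations say `b h = k b`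
and `c k = h c`. With `P(x) = x² + s x`, the third relation rewrites the multiple
`z = r bc + p h² + p r cb` of the Casimir element in two ways:
`z = (1 + p) r cb + P(h) = (1 + p) r bc + P(k)`.
Since `b P(h) = P(k) b` and `c P(k) = P(h) c`, both `b z = z b` and `c z = z c` are immediate;
and `h` commutes with `z` because it commutes with `c b`.
-/

theorem commute_of_eq_smul_mul_add {R A : Type*} [CommSemiring R] [Semiring A] [Algebra R A]
    {a : R} {b c x y z : A} (hb : SemiconjBy b x y) (hx : z = a • (c * b) + x)
    (hy : z = a • (b * c) + y) : Commute z b :=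
  calc z * b = a • (b * c * b) + y * b := by rw [hy, add_mul, smul_mul_assoc]
    _ = a • (b * (c * b)) + b * x := by rw [hb.eq, mul_assoc]
    _ = b * z := by rw [hx, mul_add, mul_smul_comm]

theorem semiconjBy_mul_self_add_smul {R A : Type*} [CommSemiring R] [Semiring A] [Algebra R A]
    {a x y : A} (hxy : SemiconjBy a x y) (s : R) :
    SemiconjBy a (x * x + s • x) (y * y + s • y) :=
  (hxy.mul_right hxy).add_right (by rw [SemiconjBy, mul_smul_comm, hxy.eq, smul_mul_assoc])

section ScaledCasimir

variable {R A : Type*} [CommRing R] [Ring A] [Algebra R A] {p r s : R} {b h c : A}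

/-- The element `k = p h - s` into which `h` turns when it is moved across `b` or `c`. -/
def affineShift (p s : R) (h : A) : A :=
  p • h - algebraMap R A s

/-- The quadratic Casimir element with denominators cleared: for `p = q²` and `r = 2_q q` it is
`q² 2_q` times the reduced q-Casimir element. -/
def scaledCasimir (p r : R) (b h c : A) : A :=
  r • (b * c) + p • (h * h) + (p * r) • (c * b)

theorem semiconjBy_affineShift_right (hb : p • (h * b) - b * h = s • b) :
    SemiconjBy b h (affineShift p s h) := by
  rw [SemiconjBy, affineShift, sub_mul, smul_mul_assoc, ← Algebra.smul_def, ← hb, sub_sub_cancel]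

theorem semiconjBy_affineShift_left (hc : p • (c * h) - h * c = s • c) :
    SemiconjBy c (affineShift p s h) h := by
  rw [SemiconjBy, affineShift, mul_sub, mul_smul_comm, ← Algebra.commutes, ← Algebra.smul_def,
    ← hc, sub_sub_cancel]

theorem affineShift_mul_self_add_smul (p s : R) (h : A) :
    affineShift p s h * affineShift p s h + s • affineShift p s h =
      (p * p) • (h * h) - (p * s) • h := by
  simp only [affineShift, Algebra.algebraMap_eq_smul_one, mul_sub, sub_mul, smul_mul_assoc,
    mul_smul_comm, one_mul, mul_one]
  module

theorem scaledCasimir_eq_smul_mul_add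
    (hbc : r • (b * c - c * b) + (p - 1) • (h * h) = s • h) :
    scaledCasimir p r b h c = ((1 + p) * r) • (c * b) + (h * h + s • h) := by
  rw [scaledCasimir, ← hbc]
  module

theorem scaledCasimir_eq_smul_mul_add_affineShift
    (hbc : r • (b * c - c * b) + (p - 1) • (h * h) = s • h) :
    scaledCasimir p r b h c = ((1 + p) * r) • (b * c) +
      (affineShift p s h * affineShift p s h + s • affineShift p s h) := by
  rw [affineShift_mul_self_add_smul, mul_smul p s h, ← hbc, scaledCasimir]
  module

theorem commute_scaledCasimir_middle (hb : p • (h * b) - b * h = s • b)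
    (hc : p • (c * h) - h * c = s • c)
    (hbc : r • (b * c - c * b) + (p - 1) • (h * h) = s • h) :
    Commute (scaledCasimir p r b h c) h := by
  have hcb : Commute (c * b) h :=
    (semiconjBy_affineShift_left hc).mul_left (semiconjBy_affineShift_right hb)
  have hh : Commute h h := Commute.refl h
  rw [scaledCasimir_eq_smul_mul_add hbc]
  exact (hcb.smul_left _).add_left ((hh.mul_left hh).add_left (hh.smul_left s))

theorem stmt_5_general (hb : p • (h * b) - b * h = s • b)
    (hc : p • (c * h) - h * c = s • c)
    (hbc : r • (b * c - c * b) + (p - 1) • (h * h) = s • h) :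
    ∀ x ∈ ({b, h, c} : Set A), Commute (scaledCasimir p r b h c) x := by
  have hz := scaledCasimir_eq_smul_mul_add hbc
  have hz' := scaledCasimir_eq_smul_mul_add_affineShift hbc
  rintro x (rfl | rfl | rfl)
  · exact commute_of_eq_smul_mul_add
      (semiconjBy_mul_self_add_smul (semiconjBy_affineShift_right hb) s) hz hz'
  · exact commute_scaledCasimir_middle hb hc hbc
  · exact commute_of_eq_smul_mul_add
      (semiconjBy_mul_self_add_smul (semiconjBy_affineShift_left hc) s) hz' hz

end ScaledCasimir

theorem reducedCasimir_eq_smul_scaledCasimir {K A : Type*} [Field K] [Ring A] [Algebra K A]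
    {q t : K} (hq : q ≠ 0) (ht : t ≠ 0) (b h c : A) :
    q⁻¹ • (b * c) + t⁻¹ • (h * h) + q • (c * b) =
      (q ^ 2 * t)⁻¹ • scaledCasimir (q ^ 2) (t * q) b h c := by
  rw [scaledCasimir]
  match_scalars <;> field_simp

/-- In any unital associative algebra whose elements `b,h,c` satisfy the relations of
`SL(R_q,ℏ)` (standard `SL(2)` case), the reduced q-Casimir
`Cas_sl = q⁻¹bc + h²/2_q + q·cb` commutes with each of `b,h,c`. -/
theorem stmt_5 (K : Type*) [Field K] (A : Type*) [Ring A] [Algebra K A]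
    (q ℏ : K) (hq : q ≠ 0) (h2q : q + q⁻¹ ≠ 0) (b h c : A)
    (r1 : q ^ 2 • (h * b) - b * h = ((q + q⁻¹) * ℏ) • b)
    (r2 : q ^ 2 • (c * h) - h * c = ((q + q⁻¹) * ℏ) • c)
    (r3 : ((q + q⁻¹) * q) • (b * c - c * b) + (q ^ 2 - 1) • (h * h) =
      ((q + q⁻¹) * ℏ) • h) :
    (∀ x ∈ ({b, h, c} : Set A),
      (q⁻¹ • (b * c) + (q + q⁻¹)⁻¹ • (h * h) + q • (c * b)) * x =
        x * (q⁻¹ • (b * c) + (q + q⁻¹)⁻¹ • (h * h) + q • (c * b))) := by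
  rw [reducedCasimir_eq_smul_scaledCasimir hq h2q]
  exact fun x hx => (stmt_5_general r1 r2 r3 x hx).smul_left _
end

section
/- Let K be a field, q ∈ K nonzero with 2_q := q + q⁻¹ ≠ 0, ℏ ∈ K, and let A be a unital associative K-algebra containing elements b,h,c satisfying the SL(R_q,ℏ) relations. Then the 2×2 matrix F = [[q·h/2_q, b],[c, −q⁻¹·h/2_q]] with entries in A satisfies the Cayley–Hamilton identity F² − q⁻¹ℏ·F − (Cas_sl/2_q)·I = 0, where Cas_sl = q⁻¹bc + h²/2_q + q·cb and I is the 2×2 identity matrix. -/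
/-!
Put `t = h / 2_q` and weight the diagonal by the quantum trace `M ↦ q⁻¹ M₀₀ + q M₁₁`. The first
two relations annihilate the off-diagonal entries of `F² - q⁻¹ℏ F`, and the third one equates its
two diagonal entries, so `F² - q⁻¹ℏ F = x I` for some `x`. Since `F` has quantum trace `0` and `F²`
has quantum trace `Cas_sl`, comparing quantum traces gives `2_q x = Cas_sl`.
-/

section QuantumTrace

variable {K M A : Type*} [CommSemiring K] [AddCommMonoid M] [Module K M] [Semiring A] [Module K A]
  (q : K) [Invertible q]

/-- The quantum trace of a `2 × 2` matrix, normalized so that the identity has quantum trace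
`q + q⁻¹`; it reads off the scalar of a scalar matrix. -/
def qTrace : Matrix (Fin 2) (Fin 2) M →ₗ[K] M :=
  ⅟q • Matrix.entryLinearMap K M 0 0 + q • Matrix.entryLinearMap K M 1 1

theorem qTrace_apply (X : Matrix (Fin 2) (Fin 2) M) : qTrace q X = ⅟q • X 0 0 + q • X 1 1 := rfl

theorem qTrace_smul_one (x : A) :
    qTrace q (x • (1 : Matrix (Fin 2) (Fin 2) A)) = (q + ⅟q) • x := by
  simp [qTrace_apply, add_smul, add_comm]

theorem eq_invOf_smul_qTrace_smul_one [Invertible (q + ⅟q)] {X : Matrix (Fin 2) (Fin 2) A} {x : A}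
    (hX : X = x • (1 : Matrix (Fin 2) (Fin 2) A)) :
    X = (⅟(q + ⅟q) • qTrace q X) • (1 : Matrix (Fin 2) (Fin 2) A) := by
  rw [hX, qTrace_smul_one, invOf_smul_smul]

end QuantumTrace

theorem smul_sub_invOf_smul_of_sq_smul_sub {K M : Type*} [CommRing K] [AddCommGroup M]
    [Module K M] {q ℏ : K} [Invertible q] {x y z : M} (hxyz : q ^ 2 • x - y = ℏ • z) :
    q • x - ⅟q • y = (⅟q * ℏ) • z := by
  rw [mul_smul, ← hxyz, smul_sub, smul_smul, sq, invOf_mul_cancel_left]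

section SLMatrix

variable {K A : Type*} [CommRing K] [Ring A] [Algebra K A] (q : K) [Invertible q] (b t c : A)

/-- The `sl`-reduced matrix of generators, written in the rescaled Cartan generator
`t = h / (q + q⁻¹)`. -/
def slMatrix : Matrix (Fin 2) (Fin 2) A :=
  !![q • t, b; c, -(⅟q • t)]

theorem qTrace_slMatrix : qTrace q (slMatrix q b t c) = 0 := by
  simp [qTrace_apply, slMatrix]

theorem slMatrix_mul_self :
    slMatrix q b t c * slMatrix q b t c =
      !![q ^ 2 • (t * t) + b * c, q • (t * b) - ⅟q • (b * t);
        q • (c * t) - ⅟q • (t * c), c * b + ⅟q ^ 2 • (t * t)] := by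
  simp [slMatrix, smul_smul, sq, sub_eq_add_neg]

theorem qTrace_slMatrix_mul_self :
    qTrace q (slMatrix q b t c * slMatrix q b t c) =
      ⅟q • (b * c) + (q + ⅟q) • (t * t) + q • (c * b) := by
  have hq : q * ⅟q = 1 := mul_invOf_self q
  simp only [slMatrix_mul_self, qTrace_apply, Matrix.of_apply, Matrix.cons_val]
  match_scalars
  · linear_combination (q + ⅟q) * hq
  · ring
  · ring

variable {q b t c} {ℏ : K}

theorem slMatrix_diagonal_eq
    (hbc : q • (b * c - c * b) + ((q ^ 2 - 1) * (q + ⅟q)) • (t * t) = ((q + ⅟q) * ℏ) • t) :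
    c * b + ⅟q ^ 2 • (t * t) + (⅟q * ℏ) • ⅟q • t = q ^ 2 • (t * t) + b * c - ℏ • t := by
  have hq : q * ⅟q = 1 := mul_invOf_self q
  linear_combination (norm := skip) -⅟q • hbc
  match_scalars
  · linear_combination -hq
  · linear_combination (q ^ 2 + q * ⅟q) * hq
  · linear_combination -ℏ * hq
  · linear_combination hq

theorem slMatrix_mul_self_sub_smul (htb : q ^ 2 • (t * b) - b * t = ℏ • b)
    (hct : q ^ 2 • (c * t) - t * c = ℏ • c)
    (hbc : q • (b * c - c * b) + ((q ^ 2 - 1) * (q + ⅟q)) • (t * t) = ((q + ⅟q) * ℏ) • t) :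
    slMatrix q b t c * slMatrix q b t c - (⅟q * ℏ) • slMatrix q b t c =
      (q ^ 2 • (t * t) + b * c - ℏ • t) • (1 : Matrix (Fin 2) (Fin 2) A) := by
  have diag_zero : (⅟q * ℏ) • q • t = ℏ • t := by
    rw [smul_smul, mul_right_comm, invOf_mul_self, one_mul]
  rw [slMatrix_mul_self, smul_sub_invOf_smul_of_sq_smul_sub htb,
    smul_sub_invOf_smul_of_sq_smul_sub hct, ← Matrix.ext_iff]
  simp [Fin.forall_fin_two, slMatrix, diag_zero, slMatrix_diagonal_eq hbc]

theorem slMatrix_cayley_hamilton [Invertible (q + ⅟q)]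
    (htb : q ^ 2 • (t * b) - b * t = ℏ • b) (hct : q ^ 2 • (c * t) - t * c = ℏ • c)
    (hbc : q • (b * c - c * b) + ((q ^ 2 - 1) * (q + ⅟q)) • (t * t) = ((q + ⅟q) * ℏ) • t) :
    slMatrix q b t c * slMatrix q b t c - (⅟q * ℏ) • slMatrix q b t c =
      (⅟(q + ⅟q) • (⅟q • (b * c) + (q + ⅟q) • (t * t) + q • (c * b))) •
        (1 : Matrix (Fin 2) (Fin 2) A) := by
  simpa only [map_sub, map_smul, qTrace_slMatrix, qTrace_slMatrix_mul_self, smul_zero, sub_zero]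
    using eq_invOf_smul_qTrace_smul_one q (slMatrix_mul_self_sub_smul htb hct hbc)

end SLMatrix

theorem stmt_6_general {K A : Type*} [CommRing K] [Ring A] [Algebra K A]
    (q ℏ : K) [Invertible q] [Invertible (q + ⅟q)] (b h c : A)
    (hhb : q ^ 2 • (h * b) - b * h = ((q + ⅟q) * ℏ) • b)
    (hch : q ^ 2 • (c * h) - h * c = ((q + ⅟q) * ℏ) • c)
    (hbc : ((q + ⅟q) * q) • (b * c - c * b) + (q ^ 2 - 1) • (h * h) = ((q + ⅟q) * ℏ) • h) :
    let F : Matrix (Fin 2) (Fin 2) A :=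
      !![(q * ⅟(q + ⅟q)) • h, b; c, -((⅟q * ⅟(q + ⅟q)) • h)]
    let Cas : A := ⅟q • (b * c) + ⅟(q + ⅟q) • (h * h) + q • (c * b)
    F * F - (⅟q * ℏ) • F - (⅟(q + ⅟q) • Cas) • (1 : Matrix (Fin 2) (Fin 2) A) = 0 := by
  obtain ⟨t, rfl⟩ : ∃ t, h = (q + ⅟q) • t := ⟨⅟(q + ⅟q) • h, (smul_invOf_smul _ _).symm⟩
  have cancel {x y : A} (hxy : (q + ⅟q) • x = (q + ⅟q) • y) : x = y :=
    (isUnit_of_invertible (q + ⅟q)).smul_left_cancel.mp hxy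
  have htb : q ^ 2 • (t * b) - b * t = ℏ • b := cancel <| by
    simpa only [smul_mul_assoc, mul_smul_comm, smul_sub, mul_smul, smul_comm (q ^ 2)] using hhb
  have hct : q ^ 2 • (c * t) - t * c = ℏ • c := cancel <| by
    simpa only [smul_mul_assoc, mul_smul_comm, smul_sub, mul_smul, smul_comm (q ^ 2)] using hch
  have htt : q • (b * c - c * b) + ((q ^ 2 - 1) * (q + ⅟q)) • (t * t) = ((q + ⅟q) * ℏ) • t :=
    cancel <| by
      linear_combination (norm := (simp only [smul_mul_assoc, mul_smul_comm]; module)) hbc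
  have hF : !![(q * ⅟(q + ⅟q)) • (q + ⅟q) • t, b; c, -((⅟q * ⅟(q + ⅟q)) • (q + ⅟q) • t)] =
      slMatrix q b t c := by
    simp only [slMatrix, mul_smul, invOf_smul_smul]
  have hCas : ⅟(q + ⅟q) • ((q + ⅟q) • t * (q + ⅟q) • t) = (q + ⅟q) • (t * t) := by
    rw [smul_mul_assoc, invOf_smul_smul, mul_smul_comm]
  intro F Cas
  simpa only [F, Cas, hF, hCas] using sub_eq_zero.mpr (slMatrix_cayley_hamilton htb hct htt)

/-- Cayley–Hamilton identity for the sl-reduced matrix `F` of generators of the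
modified reflection equation algebra: `F² − q⁻¹ℏ·F − (Cas_sl/2_q)·I = 0`. -/
theorem stmt_6 (K : Type*) [Field K] (A : Type*) [Ring A] [Algebra K A]
    (q ℏ : K) (hq : q ≠ 0) (h2q : q + q⁻¹ ≠ 0) (b h c : A)
    (r1 : q ^ 2 • (h * b) - b * h = ((q + q⁻¹) * ℏ) • b)
    (r2 : q ^ 2 • (c * h) - h * c = ((q + q⁻¹) * ℏ) • c)
    (r3 : ((q + q⁻¹) * q) • (b * c - c * b) + (q ^ 2 - 1) • (h * h) =
      ((q + q⁻¹) * ℏ) • h)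
    (F : Matrix (Fin 2) (Fin 2) A)
    (hF : F = !![(q / (q + q⁻¹)) • h, b; c, -((q⁻¹ / (q + q⁻¹)) • h)])
    (Cas : A)
    (hCas : Cas = q⁻¹ • (b * c) + (q + q⁻¹)⁻¹ • (h * h) + q • (c * b)) :
    F * F - (q⁻¹ * ℏ) • F - ((q + q⁻¹)⁻¹ • Cas) • (1 : Matrix (Fin 2) (Fin 2) A) = 0 := by
  let := invertibleOfNonzero hq
  let : Invertible (q + ⅟q) := invertibleOfNonzero h2q
  simpa only [hF, hCas, div_eq_mul_inv, invOf_eq_inv] using stmt_6_general q ℏ b h c r1 r2 r3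
end

section
/- Let K be a field and q ∈ K nonzero with 2_q := q + q⁻¹ ≠ 0. Let A be a unital associative K-algebra containing elements X₀, X₊, X₋ and a central invertible element C satisfying: q²X₀X₊ − X₊X₀ = qCX₊; q⁻²X₀X₋ − X₋X₀ = −q⁻¹CX₋; X₊X₋ − X₋X₊ + (q² − q⁻²)X₀² = (q + q⁻¹)CX₀. Then the elements h = 2_q·q⁻¹C⁻¹X₀, b = q⁻¹C⁻¹X₊, c = q⁻¹C⁻¹X₋ satisfy the SL(R_q,ℏ) relations with ℏ = 1: q²hb − bh = 2_q·b; q²ch − hc = 2_q·c; 2_q·q(bc − cb) + (q²−1)h² = 2_q·h. -/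
/-!
The Lyubashenko–Sudbery relations are homogeneous of degree two once `C` is given degree one, so
multiplying each `X` by `C⁻¹` reduces to the case `C = 1`. There the two presentations differ only
by scalars: `b` and `c` are rescaled by `q⁻¹`, and the identity `(q² - 1)(1 + q⁻²) = q² - q⁻²`
matches the coefficients of the quadratic Cartan terms.
-/

section QuantumLieAlgebra

variable {R A : Type*} [CommRing R] [Ring A] [Algebra R A]

/-- The quantum integer `2_q = q + q⁻¹`, for an invertible parameter `q` of a commutative ring. -/
def quantumTwo (q : Rˣ) : R := q + ↑q⁻¹

/-- The relations of the Lyubashenko–Sudbery quantum Lie algebra, where `X0`, `Xp`, `Xm` stand for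
`X₀`, `X₊`, `X₋`. Centrality and invertibility of `C` are not part of this predicate. -/
structure IsLyubashenkoSudberyTriple (q : Rˣ) (C X0 Xp Xm : A) : Prop where
  zero_plus : (q : R) ^ 2 • (X0 * Xp) - Xp * X0 = (q : R) • (C * Xp)
  zero_minus : (↑q⁻¹ : R) ^ 2 • (X0 * Xm) - Xm * X0 = -((↑q⁻¹ : R) • (C * Xm))
  plus_minus : Xp * Xm - Xm * Xp + ((q : R) ^ 2 - (↑q⁻¹ : R) ^ 2) • (X0 * X0) =
    quantumTwo q • (C * X0)

/-- The defining relations of the algebra `SL(R_q, ℏ)` in the standard `SL(2)` case. -/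
structure IsSLTriple (q : Rˣ) (ℏ : R) (b h c : A) : Prop where
  h_b : (q : R) ^ 2 • (h * b) - b * h = (quantumTwo q * ℏ) • b
  c_h : (q : R) ^ 2 • (c * h) - h * c = (quantumTwo q * ℏ) • c
  b_c : (quantumTwo q * q) • (b * c - c * b) + ((q : R) ^ 2 - 1) • (h * h) =
    (quantumTwo q * ℏ) • h

theorem quantumTwo_mul_inv_mul_sq_sub_one (q : Rˣ) :
    quantumTwo q * ↑q⁻¹ * ((q : R) ^ 2 - 1) = (q : R) ^ 2 - (↑q⁻¹ : R) ^ 2 := by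
  unfold quantumTwo
  linear_combination ((q : R) ^ 2 + q * ↑q⁻¹) * q.mul_inv

theorem units_inv_mul_mul_units_inv_mul_of_commute {M : Type*} [Monoid M] {u : Mˣ} {x : M}
    (hx : Commute (u : M) x) (y : M) :
    ↑u⁻¹ * x * (↑u⁻¹ * y) = ↑u⁻¹ * (↑u⁻¹ * (x * y)) := by
  simp only [mul_assoc, hx.units_inv_left.symm.left_comm]

namespace IsLyubashenkoSudberyTriple

variable {q : Rˣ} {X0 Xp Xm : A}

theorem units_inv_mul {C : Aˣ} (H : IsLyubashenkoSudberyTriple q (C : A) X0 Xp Xm)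
    (h0 : Commute (C : A) X0) (hp : Commute (C : A) Xp) (hm : Commute (C : A) Xm) :
    IsLyubashenkoSudberyTriple q 1 (↑C⁻¹ * X0) (↑C⁻¹ * Xp) (↑C⁻¹ * Xm) where
  zero_plus := by
    have := congrArg (fun z : A => ↑C⁻¹ * (↑C⁻¹ * z)) H.zero_plus
    simpa only [units_inv_mul_mul_units_inv_mul_of_commute h0,
      units_inv_mul_mul_units_inv_mul_of_commute hp,
      mul_sub, mul_smul_comm, Units.inv_mul_cancel_left, one_mul] using this
  zero_minus := by
    have := congrArg (fun z : A => ↑C⁻¹ * (↑C⁻¹ * z)) H.zero_minus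
    simpa only [units_inv_mul_mul_units_inv_mul_of_commute h0,
      units_inv_mul_mul_units_inv_mul_of_commute hm,
      mul_sub, mul_neg, mul_smul_comm, Units.inv_mul_cancel_left, one_mul] using this
  plus_minus := by
    have := congrArg (fun z : A => ↑C⁻¹ * (↑C⁻¹ * z)) H.plus_minus
    simpa only [units_inv_mul_mul_units_inv_mul_of_commute h0,
      units_inv_mul_mul_units_inv_mul_of_commute hp,
      units_inv_mul_mul_units_inv_mul_of_commute hm, mul_add, mul_sub, mul_smul_comm,
      Units.inv_mul_cancel_left, one_mul] using this

theorem isSLTriple {ℏ : R} (H : IsLyubashenkoSudberyTriple q (algebraMap R A ℏ) X0 Xp Xm) :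
    IsSLTriple q ℏ ((↑q⁻¹ : R) • Xp) ((quantumTwo q * ↑q⁻¹) • X0) ((↑q⁻¹ : R) • Xm) where
  h_b := by
    have hq : (q : R) * ↑q⁻¹ = 1 := q.mul_inv
    calc
      _ = (quantumTwo q * ↑q⁻¹ * ↑q⁻¹) • ((q : R) ^ 2 • (X0 * Xp) - Xp * X0) := by
        simp only [smul_mul_smul_comm]
        module
      _ = (quantumTwo q * ↑q⁻¹ * ↑q⁻¹) • (q : R) • ℏ • Xp := by
        rw [H.zero_plus, Algebra.smul_def ℏ]
      _ = (quantumTwo q * ℏ) • (↑q⁻¹ : R) • Xp := by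
        match_scalars
        linear_combination quantumTwo q * ℏ * ↑q⁻¹ * hq
  c_h := by
    have hq : (q : R) * ↑q⁻¹ = 1 := q.mul_inv
    calc
      _ = -quantumTwo q • ((↑q⁻¹ : R) ^ 2 • (X0 * Xm) - Xm * X0) := by
        simp only [smul_mul_smul_comm]
        match_scalars
        · linear_combination quantumTwo q * (q * ↑q⁻¹ + 1) * hq
        · ring
      _ = -quantumTwo q • -((↑q⁻¹ : R) • ℏ • Xm) := by
        rw [H.zero_minus, Algebra.smul_def ℏ]
      _ = (quantumTwo q * ℏ) • (↑q⁻¹ : R) • Xm := by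
        module
  b_c := by
    have hq : (q : R) * ↑q⁻¹ = 1 := q.mul_inv
    calc
      _ = (quantumTwo q * ↑q⁻¹) •
          (Xp * Xm - Xm * Xp + ((q : R) ^ 2 - (↑q⁻¹ : R) ^ 2) • (X0 * X0)) := by
        rw [← quantumTwo_mul_inv_mul_sq_sub_one]
        simp only [smul_mul_smul_comm]
        match_scalars
        · linear_combination quantumTwo q * ↑q⁻¹ * hq
        · linear_combination -quantumTwo q * ↑q⁻¹ * hq
        · ring
      _ = (quantumTwo q * ↑q⁻¹) • quantumTwo q • ℏ • X0 := by
        rw [H.plus_minus, Algebra.smul_def ℏ]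
      _ = (quantumTwo q * ℏ) • (quantumTwo q * ↑q⁻¹) • X0 := by
        module

end IsLyubashenkoSudberyTriple

theorem stmt_9_general {q : Rˣ} {C : Aˣ} {X0 Xp Xm : A}
    (H : IsLyubashenkoSudberyTriple q (C : A) X0 Xp Xm)
    (h0 : Commute (C : A) X0) (hp : Commute (C : A) Xp) (hm : Commute (C : A) Xm) :
    IsSLTriple q 1 ((↑q⁻¹ : R) • (↑C⁻¹ * Xp)) ((quantumTwo q * ↑q⁻¹) • (↑C⁻¹ * X0))
      ((↑q⁻¹ : R) • (↑C⁻¹ * Xm)) :=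
  IsLyubashenkoSudberyTriple.isSLTriple <| by
    simpa only [map_one] using H.units_inv_mul h0 hp hm

end QuantumLieAlgebra

/-- The Lyubashenko–Sudbery quantum Lie algebra relations imply, after rescaling by
the central invertible element `C`, the `SL(R_q,1)` relations. Here `X0, Xp, Xm`
stand for `X₀, X₊, X₋`. -/
theorem stmt_9 (K : Type*) [Field K] (q : K) (hq : q ≠ 0) (h2q : q + q⁻¹ ≠ 0)
    (A : Type*) [Ring A] [Algebra K A]
    (X0 Xp Xm C Cinv : A)
    (hCentral : ∀ x : A, C * x = x * C)
    (hCinv : C * Cinv = 1) (hCinv' : Cinv * C = 1)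
    (r1 : q ^ 2 • (X0 * Xp) - Xp * X0 = q • (C * Xp))
    (r2 : (q ^ 2)⁻¹ • (X0 * Xm) - Xm * X0 = -(q⁻¹ • (C * Xm)))
    (r3 : Xp * Xm - Xm * Xp + (q ^ 2 - (q ^ 2)⁻¹) • (X0 * X0) = (q + q⁻¹) • (C * X0))
    (h b c : A)
    (hh : h = ((q + q⁻¹) * q⁻¹) • (Cinv * X0))
    (hb : b = q⁻¹ • (Cinv * Xp))
    (hc : c = q⁻¹ • (Cinv * Xm)) :
    q ^ 2 • (h * b) - b * h = (q + q⁻¹) • b ∧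
    q ^ 2 • (c * h) - h * c = (q + q⁻¹) • c ∧
    ((q + q⁻¹) * q) • (b * c - c * b) + (q ^ 2 - 1) • (h * h) = (q + q⁻¹) • h := by
  rw [← inv_pow] at r2 r3
  obtain ⟨h_b, c_h, b_c⟩ := stmt_9_general (q := Units.mk0 q hq) (C := ⟨C, Cinv, hCinv, hCinv'⟩)
    ⟨r1, r2, r3⟩ (hCentral X0) (hCentral Xp) (hCentral Xm)
  rw [mul_one] at h_b c_h b_c
  subst hh hb hc
  exact ⟨h_b, c_h, b_c⟩
end

section
/- Let K be a field, q ∈ K nonzero, and let A be a unital associative K-algebra containing elements a,b,c,d satisfying the quantum SL(2) function algebra relations: ab = qba, ac = qca, bd = qdb, bc = cb, cd = qdc, ad − da = (q − q⁻¹)bc, ad − qbc = 1. Then the 2×2 matrices over A given by e₋₁ = [[ad, −q⁻¹ab],[cd, −q⁻¹cb]] and e₁ = [[da, −qdc],[ba, −qbc]] are idempotent: e₋₁² = e₋₁ and e₁² = e₁. -/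
/-!
Each of the two matrices is a column `U` times a row `V`, and the relations make the
`1 × 1` matrix `V * U` equal to `1`; hence `(U * V) * (U * V) = U * (V * U) * V = U * V`. Exchanging
`a ↔ d`, `b ↔ c` and `q⁻¹ ↔ q` carries `e₋₁` to `e₁`, so one computation covers both.
-/

theorem isIdempotentElem_mul_of_mul_eq_one {m n R : Type*} [Fintype m] [Fintype n]
    [DecidableEq n] [Semiring R] {U : Matrix m n R} {V : Matrix n m R} (h : V * U = 1) :
    IsIdempotentElem (U * V) :=
  calc U * V * (U * V) = U * (V * U) * V := by simp only [Matrix.mul_assoc]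
    _ = U * V := by rw [h, Matrix.mul_one]

section Algebra

variable {K A : Type*} [CommRing K] [Ring A] [Algebra K A] {p q : K} {a b c d : A}

theorem isIdempotentElem_of_mul_sub_smul_mul_eq_one (h : d * a - p • (b * c) = 1) :
    IsIdempotentElem !![a * d, -(p • (a * b)); c * d, -(p • (c * b))] := by
  have row_mul_column : !![d, -(p • b)] * !![a; c] = 1 := by
    ext i j
    fin_cases i; fin_cases j
    simpa [Matrix.mul_apply, sub_eq_add_neg] using h
  have column_mul_row : !![a; c] * !![d, -(p • b)] =
      !![a * d, -(p • (a * b)); c * d, -(p • (c * b))] := by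
    ext i j
    fin_cases i <;> fin_cases j <;> simp [Matrix.mul_apply]
  exact column_mul_row ▸ isIdempotentElem_mul_of_mul_eq_one row_mul_column

theorem mul_sub_smul_mul_eq_one_of_commutator (hcomm : a * d - d * a = (q - p) • (b * c))
    (hdet : a * d - q • (b * c) = 1) : d * a - p • (b * c) = 1 :=
  calc d * a - p • (b * c)
      = a * d - q • (b * c) - (a * d - d * a - (q - p) • (b * c)) := by rw [sub_smul]; abel
    _ = 1 := by rw [hcomm, hdet, sub_self, sub_zero]

theorem stmt_10_general (hbc : b * c = c * b) (hcomm : a * d - d * a = (q - p) • (b * c))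
    (hdet : a * d - q • (b * c) = 1) :
    IsIdempotentElem !![a * d, -(p • (a * b)); c * d, -(p • (c * b))] ∧
      IsIdempotentElem !![d * a, -(q • (d * c)); b * a, -(q • (b * c))] :=
  ⟨isIdempotentElem_of_mul_sub_smul_mul_eq_one (mul_sub_smul_mul_eq_one_of_commutator hcomm hdet),
    isIdempotentElem_of_mul_sub_smul_mul_eq_one (hbc ▸ hdet)⟩

end Algebra

/-- Over any algebra whose elements `a,b,c,d` satisfy the quantum `SL(2)` function
algebra relations, the 2×2 matrices `e₋₁` and `e₁` (defining quantum line bundles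
over the quantum sphere) are idempotent. -/
theorem stmt_10 (K : Type*) [Field K] (q : K) (hq : q ≠ 0)
    (A : Type*) [Ring A] [Algebra K A] (a b c d : A)
    (r1 : a * b = q • (b * a))
    (r2 : a * c = q • (c * a))
    (r3 : b * d = q • (d * b))
    (r4 : b * c = c * b)
    (r5 : c * d = q • (d * c))
    (r6 : a * d - d * a = (q - q⁻¹) • (b * c))
    (r7 : a * d - q • (b * c) = 1)
    (em1 e1 : Matrix (Fin 2) (Fin 2) A)
    (hem1 : em1 = !![a * d, -(q⁻¹ • (a * b)); c * d, -(q⁻¹ • (c * b))])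
    (he1 : e1 = !![d * a, -(q • (d * c)); b * a, -(q • (b * c))]) :
    em1 * em1 = em1 ∧ e1 * e1 = e1 := by
  subst hem1 he1
  exact stmt_10_general r4 r6 r7
end

section
/- Let α, β ∈ ℝ. On the polynomial algebra ℝ[x,h,y], define the bracket {f,g} = p(x,h)·(∂_h f·∂_x g − ∂_x f·∂_h g) + r(y,h)·(∂_h f·∂_y g − ∂_y f·∂_h g) + s(h)·(∂_x f·∂_y g − ∂_y f·∂_x g), where p = 2αx + 2βhx, r = −2αy − 2βhy, s = αh + βh². Then this bracket satisfies the Jacobi identity: {f,{g,k}} + {g,{k,f}} + {k,{f,g}} = 0 for all f, g, k ∈ ℝ[x,h,y]; i.e. it is a Poisson bracket on sl(2)*. -/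
open MvPolynomial

/-!
In three variables a bivector field is a vector field `v`, acting by `{f, g} = v ⬝ (∇f × ∇g)`, and
its Jacobiator is `-(v ⬝ curl v) · (∇f ⬝ (∇g × ∇k))`. The pencil corresponds to
`v = -(α + βh) (2y, h, 2x)`, where `(2y, h, 2x)` is the gradient of the Casimir function
`2xy + h²/2` and hence curl-free. For a curl-free field `w` one has
`curl (u w) = ∇u × w`, which is orthogonal to `u w`, so the Jacobiator vanishes.
-/

open scoped Matrix

section CommutingDerivations

variable {R A : Type*} [CommSemiring R] [CommRing A] [Algebra R A] (D : Fin 3 → Derivation R A A)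

/-- The gradient of `f` with respect to three derivations `D 0`, `D 1`, `D 2`, which play the role
of partial derivatives. -/
def derivGrad (f : A) : Fin 3 → A := fun i => D i f

/-- The curl of a vector field with respect to three derivations. -/
def derivCurl (v : Fin 3 → A) : Fin 3 → A :=
  ![D 1 (v 2) - D 2 (v 1), D 2 (v 0) - D 0 (v 2), D 0 (v 1) - D 1 (v 0)]

/-- The skew-symmetric biderivation `v ⬝ (∇f × ∇g)` given by a bivector field in three variables,
where the bivector field is encoded as the vector field `v` of its components along
`D 1 ∧ D 2`, `D 2 ∧ D 0` and `D 0 ∧ D 1`. -/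
def bivectorBracket (v : Fin 3 → A) (f g : A) : A := v ⬝ᵥ (derivGrad D f ⨯₃ derivGrad D g)

theorem bivectorBracket_eq (v : Fin 3 → A) (f g : A) :
    bivectorBracket D v f g =
      v 0 * (D 1 f * D 2 g - D 2 f * D 1 g) + v 1 * (D 2 f * D 0 g - D 0 f * D 2 g) +
        v 2 * (D 0 f * D 1 g - D 1 f * D 0 g) := by
  simp [bivectorBracket, derivGrad, cross_apply, dotProduct, Fin.sum_univ_three]

theorem derivation_bivectorBracket {E : Derivation R A A} (hE : ∀ i a, E (D i a) = D i (E a))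
    (v : Fin 3 → A) (f g : A) :
    E (bivectorBracket D v f g) =
      bivectorBracket D (fun i => E (v i)) f g + bivectorBracket D v (E f) g +
        bivectorBracket D v f (E g) := by
  simp only [bivectorBracket_eq, map_add, map_sub, Derivation.leibniz, smul_eq_mul, hE]
  ring

theorem bivectorBracket_jacobiator (hD : ∀ i j a, D i (D j a) = D j (D i a)) (v : Fin 3 → A)
    (f g k : A) :
    bivectorBracket D v f (bivectorBracket D v g k) +
        bivectorBracket D v g (bivectorBracket D v k f) +
        bivectorBracket D v k (bivectorBracket D v f g) =
      -(v ⬝ᵥ derivCurl D v) * (derivGrad D f ⬝ᵥ (derivGrad D g ⨯₃ derivGrad D k)) := by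
  have leibniz (i : Fin 3) := derivation_bivectorBracket D (hD i) v
  rw [bivectorBracket_eq D v f, bivectorBracket_eq D v g (bivectorBracket D v k f),
    bivectorBracket_eq D v k (bivectorBracket D v f g)]
  simp only [leibniz]
  simp only [bivectorBracket_eq, hD 1 0, hD 2 0, hD 2 1, derivCurl, derivGrad, cross_apply,
    dotProduct, Fin.sum_univ_three, Matrix.cons_val]
  ring

theorem derivCurl_smul (u : A) (w : Fin 3 → A) :
    derivCurl D (u • w) = u • derivCurl D w + derivGrad D u ⨯₃ w := by
  ext i
  fin_cases i <;> simp [derivCurl, derivGrad, cross_apply] <;> ring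

theorem smul_dotProduct_derivCurl_smul {w : Fin 3 → A} (hw : derivCurl D w = 0) (u : A) :
    (u • w) ⬝ᵥ derivCurl D (u • w) = 0 := by
  rw [derivCurl_smul, hw, smul_zero, zero_add, smul_dotProduct, dot_cross_self, smul_zero]

theorem bivectorBracket_smul_jacobi (hD : ∀ i j a, D i (D j a) = D j (D i a)) {w : Fin 3 → A}
    (hw : derivCurl D w = 0) (u f g k : A) :
    bivectorBracket D (u • w) f (bivectorBracket D (u • w) g k) +
        bivectorBracket D (u • w) g (bivectorBracket D (u • w) k f) +
        bivectorBracket D (u • w) k (bivectorBracket D (u • w) f g) = 0 := by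
  rw [bivectorBracket_jacobiator D hD, smul_dotProduct_derivCurl_smul D hw, neg_zero, zero_mul]

end CommutingDerivations

theorem pderiv_pderiv_comm {σ R : Type*} [CommSemiring R] (i j : σ) (f : MvPolynomial σ R) :
    pderiv i (pderiv j f) = pderiv j (pderiv i f) := by
  classical
  induction f using MvPolynomial.induction_on with
  | C a => simp only [pderiv_C, map_zero]
  | add p q hp hq => simp only [map_add, hp, hq]
  | mul_X p k hp =>
    have pderiv_pderiv_X (i j : σ) : pderiv i (pderiv j (X k : MvPolynomial σ R)) = 0 := by
      rw [pderiv_X, Pi.single_apply]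
      split_ifs <;> simp
    simp only [pderiv_mul, map_add, hp, pderiv_pderiv_X, mul_zero, add_zero]
    ring

section SlTwo

variable (R : Type*) [CommRing R]

/-- The gradient `(2y, h, 2x)` of the Casimir function `2xy + h²/2` on `sl(2)*`, in the coordinates
`x = X 0`, `h = X 1`, `y = X 2`. It is written out so that `2` need not be invertible. -/
noncomputable def slTwoCasimirGrad : Fin 3 → MvPolynomial (Fin 3) R := ![2 • X 2, X 1, 2 • X 0]

theorem derivCurl_slTwoCasimirGrad : derivCurl pderiv (slTwoCasimirGrad R) = 0 := by
  ext1 i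
  fin_cases i <;> simp [derivCurl, slTwoCasimirGrad, pderiv_X, -nsmul_eq_mul]

variable {R}

theorem bivectorBracket_smul_slTwoCasimirGrad (u f g : MvPolynomial (Fin 3) R) :
    bivectorBracket pderiv (u • slTwoCasimirGrad R) f g =
      u * (2 * X 2 * (pderiv 1 f * pderiv 2 g - pderiv 2 f * pderiv 1 g) +
        X 1 * (pderiv 2 f * pderiv 0 g - pderiv 0 f * pderiv 2 g) +
        2 * X 0 * (pderiv 0 f * pderiv 1 g - pderiv 1 f * pderiv 0 g)) := by
  rw [bivectorBracket_eq]
  simp only [slTwoCasimirGrad, Pi.smul_apply, smul_eq_mul, Matrix.cons_val]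
  ring

end SlTwo

theorem stmt_11_general {R : Type*} [CommRing R] (α β : R)
    (x h y : MvPolynomial (Fin 3) R)
    (hx : x = X 0) (hh : h = X 1) (hy : y = X 2)
    (p r s : MvPolynomial (Fin 3) R)
    (hp : p = C (2 * α) * x + C (2 * β) * h * x)
    (hr : r = -(C (2 * α) * y) - C (2 * β) * h * y)
    (hs : s = C α * h + C β * h ^ 2)
    (br : MvPolynomial (Fin 3) R → MvPolynomial (Fin 3) R → MvPolynomial (Fin 3) R)
    (hbr : ∀ f g, br f g =
      p * (pderiv 1 f * pderiv 0 g - pderiv 0 f * pderiv 1 g) +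
      r * (pderiv 1 f * pderiv 2 g - pderiv 2 f * pderiv 1 g) +
      s * (pderiv 0 f * pderiv 2 g - pderiv 2 f * pderiv 0 g)) :
    ∀ f g k : MvPolynomial (Fin 3) R,
      br f (br g k) + br g (br k f) + br k (br f g) = 0 := by
  have br_eq : br = bivectorBracket pderiv (-(C α + C β * h) • slTwoCasimirGrad R) := by
    funext f g
    rw [hbr, bivectorBracket_smul_slTwoCasimirGrad, hp, hr, hs, hx, hh, hy]
    simp only [C_mul, map_ofNat]
    ring
  intro f g k
  rw [br_eq]
  exact bivectorBracket_smul_jacobi (R := R) pderiv pderiv_pderiv_comm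
    (derivCurl_slTwoCasimirGrad R) _ f g k

/-- The Poisson pencil `α{,}_KKS + β{,}_REA` on `sl(2)*` (with coordinates
`x = X 0`, `h = X 1`, `y = X 2`) satisfies the Jacobi identity. -/
theorem stmt_11 (α β : ℝ)
    (x h y : MvPolynomial (Fin 3) ℝ)
    (hx : x = X 0) (hh : h = X 1) (hy : y = X 2)
    (p r s : MvPolynomial (Fin 3) ℝ)
    (hp : p = C (2 * α) * x + C (2 * β) * h * x)
    (hr : r = -(C (2 * α) * y) - C (2 * β) * h * y)
    (hs : s = C α * h + C β * h ^ 2)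
    (br : MvPolynomial (Fin 3) ℝ → MvPolynomial (Fin 3) ℝ → MvPolynomial (Fin 3) ℝ)
    (hbr : ∀ f g, br f g =
      p * (pderiv 1 f * pderiv 0 g - pderiv 0 f * pderiv 1 g) +
      r * (pderiv 1 f * pderiv 2 g - pderiv 2 f * pderiv 1 g) +
      s * (pderiv 0 f * pderiv 2 g - pderiv 2 f * pderiv 0 g)) :
    ∀ f g k : MvPolynomial (Fin 3) ℝ,
      br f (br g k) + br g (br k f) + br k (br f g) = 0 :=
  stmt_11_general α β x h y hx hh hy p r s hp hr hs br hbr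
end

section
/- Let K be a field, q ∈ K nonzero with 2_q := q + q⁻¹ ≠ 0, and w ∈ K. The 3×3 matrices B = w·[[0,−1,0],[0,0,q/2_q],[0,0,0]], H = w·diag(q², q²−1, −1), C = w·[[0,0,0],[−q/2_q,0,0],[0,q²,0]] satisfy the SL(R_q,ℏ) relations with ℏ = w(q⁴−q²+1)/2_q: q²HB − BH = 2_qℏ·B; q²CH − HC = 2_qℏ·C; 2_q·q(BC − CB) + (q²−1)H² = 2_qℏ·H. -/
/-!
In the basis `b, h, c` the operator `H` is diagonal, with entries `d = w (q², q² - 1, -1)`, while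
`B` is supported on the superdiagonal and `C` on the subdiagonal. The first two relations therefore
amount to `q² dᵢ - dᵢ₊₁` taking the same value `w (q⁴ - q² + 1)` for `i = 0, 1`. In the third
relation every term is diagonal, and `2_q · (q / 2_q) = q` reduces it to polynomial identities
in `q`.
-/

open Matrix

namespace BraidedSl2

section Diagonal

variable {n R : Type*} [Fintype n] [DecidableEq n] [CommRing R]

theorem smul_diagonal_mul_sub_mul_diagonal {t κ : R} {d : n → R} {M : Matrix n n R}
    (hM : ∀ i j, M i j ≠ 0 → t * d i - d j = κ) :
    t • (diagonal d * M) - M * diagonal d = κ • M := by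
  ext i j
  simp only [Matrix.sub_apply, Matrix.smul_apply, diagonal_mul, mul_diagonal, smul_eq_mul]
  by_cases hij : M i j = 0
  · simp [hij]
  · linear_combination M i j * hM i j hij

theorem smul_mul_diagonal_sub_diagonal_mul {t κ : R} {d : n → R} {M : Matrix n n R}
    (hM : ∀ i j, M i j ≠ 0 → t * d j - d i = κ) :
    t • (M * diagonal d) - diagonal d * M = κ • M := by
  have transposed : t • (diagonal d * Mᵀ) - Mᵀ * diagonal d = κ • Mᵀ :=
    smul_diagonal_mul_sub_mul_diagonal fun i j => hM j i
  simpa using congrArg transpose transposed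

end Diagonal

variable {R : Type*} [CommRing R]

/-- The matrix of `ad b` in the basis `b, h, c` of `sl(2)_q`. The parameter `x` stands for
`q / 2_q`, so that no division is needed. -/
def adB (x w : R) : Matrix (Fin 3) (Fin 3) R :=
  w • !![0, -1, 0; 0, 0, x; 0, 0, 0]

/-- The matrix of `ad h` in the basis `b, h, c` of `sl(2)_q`. -/
def adH (q w : R) : Matrix (Fin 3) (Fin 3) R :=
  w • !![q ^ 2, 0, 0; 0, q ^ 2 - 1, 0; 0, 0, -1]

/-- The matrix of `ad c` in the basis `b, h, c` of `sl(2)_q`, with `x` standing for `q / 2_q`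
as in `adB`. -/
def adC (q x w : R) : Matrix (Fin 3) (Fin 3) R :=
  w • !![0, 0, 0; -x, 0, 0; 0, q ^ 2, 0]

theorem adH_eq_diagonal (q w : R) :
    adH q w = diagonal ![w * q ^ 2, w * (q ^ 2 - 1), -w] := by
  ext i j
  fin_cases i <;> fin_cases j <;> simp [adH]

theorem smul_adH_mul_adB_sub (q x w : R) :
    q ^ 2 • (adH q w * adB x w) - adB x w * adH q w =
      (w * (q ^ 4 - q ^ 2 + 1)) • adB x w := by
  rw [adH_eq_diagonal]
  refine smul_diagonal_mul_sub_mul_diagonal fun i j hij => ?_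
  fin_cases i <;> fin_cases j <;> simp [adB] at hij ⊢ <;> ring

theorem smul_adC_mul_adH_sub (q x w : R) :
    q ^ 2 • (adC q x w * adH q w) - adH q w * adC q x w =
      (w * (q ^ 4 - q ^ 2 + 1)) • adC q x w := by
  rw [adH_eq_diagonal]
  refine smul_mul_diagonal_sub_diagonal_mul fun i j hij => ?_
  fin_cases i <;> fin_cases j <;> simp [adC] at hij ⊢ <;> ring

theorem adB_mul_adC_sub (q x w : R) :
    adB x w * adC q x w - adC q x w * adB x w =
      (w ^ 2 * x) • diagonal ![1, q ^ 2 - 1, -q ^ 2] := by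
  ext i j
  fin_cases i <;> fin_cases j <;> simp [adB, adC] <;> ring

theorem smul_adB_mul_adC_sub_add_smul_adH_mul_adH {q s x : R} (hx : s * x = q) (w : R) :
    (s * q) • (adB x w * adC q x w - adC q x w * adB x w) +
        (q ^ 2 - 1) • (adH q w * adH q w) =
      (w * (q ^ 4 - q ^ 2 + 1)) • adH q w := by
  have coefficient : s * q * (w ^ 2 * x) = w ^ 2 * q ^ 2 := by
    linear_combination w ^ 2 * q * hx
  rw [adB_mul_adC_sub, smul_smul, coefficient, adH_eq_diagonal, diagonal_mul_diagonal,
    ← diagonal_smul, ← diagonal_smul, ← diagonal_smul, diagonal_add]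
  congr 1
  ext i
  fin_cases i <;> simp <;> ring

end BraidedSl2

open BraidedSl2 in
theorem stmt_12_general {R : Type*} [CommRing R] {q s x w ℏ : R} (hx : s * x = q)
    (hℏ : s * ℏ = w * (q ^ 4 - q ^ 2 + 1)) :
    q ^ 2 • (adH q w * adB x w) - adB x w * adH q w = (s * ℏ) • adB x w ∧
    q ^ 2 • (adC q x w * adH q w) - adH q w * adC q x w = (s * ℏ) • adC q x w ∧
    (s * q) • (adB x w * adC q x w - adC q x w * adB x w) +
        (q ^ 2 - 1) • (adH q w * adH q w) = (s * ℏ) • adH q w := by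
  rw [hℏ]
  exact ⟨smul_adH_mul_adB_sub q x w, smul_adC_mul_adH_sub q x w,
    smul_adB_mul_adC_sub_add_smul_adH_mul_adH hx w⟩

/-- The matrices of the q-adjoint operators `B_q = ad b`, `H_q = ad h`, `C_q = ad c`
of the braided Lie algebra `sl(2)_q` satisfy the `SL(R_q,ℏ)` relations with
`ℏ = w(q⁴ − q² + 1)/2_q`. -/
theorem stmt_12 (K : Type*) [Field K] (q : K) (hq : q ≠ 0) (h2q : q + q⁻¹ ≠ 0)
    (w : K) (ℏ : K) (hℏ : ℏ = w * (q ^ 4 - q ^ 2 + 1) / (q + q⁻¹))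
    (B H C : Matrix (Fin 3) (Fin 3) K)
    (hB : B = w • !![0, -1, 0; 0, 0, q / (q + q⁻¹); 0, 0, 0])
    (hH : H = w • !![q ^ 2, 0, 0; 0, q ^ 2 - 1, 0; 0, 0, -1])
    (hC : C = w • !![0, 0, 0; -(q / (q + q⁻¹)), 0, 0; 0, q ^ 2, 0]) :
    q ^ 2 • (H * B) - B * H = ((q + q⁻¹) * ℏ) • B ∧
    q ^ 2 • (C * H) - H * C = ((q + q⁻¹) * ℏ) • C ∧
    ((q + q⁻¹) * q) • (B * C - C * B) + (q ^ 2 - 1) • (H * H) = ((q + q⁻¹) * ℏ) • H := by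
  subst hℏ hB hH hC
  exact stmt_12_general (mul_div_cancel₀ q h2q) (mul_div_cancel₀ _ h2q)
end

section
/- Let K be a field, q ∈ K nonzero with 2_q := q + q⁻¹ ≠ 0, w ∈ K, and let A be a unital associative K-algebra containing elements b,h,c satisfying the SL(R_q,0) relations: q²hb − bh = 0; q²ch − hc = 0; 2_q·q(bc − cb) + (q²−1)h² = 0. Define the bracket [·,·] on the set {b,h,c} with values in A by the table [b,b]=0, [b,h]=−wb, [b,c]=w(q/2_q)h, [h,b]=wq²b, [h,h]=w(q²−1)h, [h,c]=−wc, [c,b]=−w(q/2_q)h, [c,h]=wq²c, [c,c]=0. Then for each x ∈ {b,h,c}: q⁻¹·b·[c,x] + (1/2_q)·h·[h,x] + q·c·[b,x] = 0 in A. -/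
/-!
In each column of the bracket table, the tangency relation is `w / s` times one of the defining
relators of the algebra: `q² h b - b h` for `x = b`, `s q (b c - c b) + (q² - 1) h²` for `x = h`,
and `q² c h - h c` for `x = c`. Here `s` stands for `2_q`.
-/

section TangentForm

variable {K A : Type*} [Field K] [NonUnitalNonAssocRing A] [Module K A]

/-- The left-hand side `q⁻¹ b C + s⁻¹ h H + q c B` of the relation between the braided tangent
vector fields, where `B`, `H`, `C` are the values at a common point of `ad b`, `ad h`, `ad c`,
and `s` plays the role of `2_q = q + q⁻¹`. -/
def tangentForm (q s : K) (b h c B H C : A) : A :=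
  q⁻¹ • (b * C) + s⁻¹ • (h * H) + q • (c * B)

variable [SMulCommClass K A A]

theorem tangentForm_bracket_b {q : K} (hq : q ≠ 0) (s w : K) (b h c : A) :
    tangentForm q s b h c 0 ((w * q ^ 2) • b) (-((w * (q / s)) • h)) =
      (w / s) • (q ^ 2 • (h * b) - b * h) := by
  simp only [tangentForm, mul_neg, mul_smul_comm, mul_zero]
  match_scalars <;> field_simp

theorem tangentForm_bracket_h {q s : K} (hq : q ≠ 0) (hs : s ≠ 0) (w : K) (b h c : A) :
    tangentForm q s b h c (-(w • b)) ((w * (q ^ 2 - 1)) • h) ((w * q ^ 2) • c) =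
      (w / s) • ((s * q) • (b * c - c * b) + (q ^ 2 - 1) • (h * h)) := by
  simp only [tangentForm, mul_neg, mul_smul_comm]
  match_scalars <;> field_simp

theorem tangentForm_bracket_c (q s w : K) (b h c : A) :
    tangentForm q s b h c ((w * (q / s)) • h) (-(w • c)) 0 =
      (w / s) • (q ^ 2 • (c * h) - h * c) := by
  simp only [tangentForm, mul_neg, mul_smul_comm, mul_zero]
  match_scalars <;> field_simp

theorem stmt_13_general {q s : K} (hq : q ≠ 0) (hs : s ≠ 0) (w : K) (b h c : A)
    (r1 : q ^ 2 • (h * b) - b * h = 0)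
    (r2 : q ^ 2 • (c * h) - h * c = 0)
    (r3 : (s * q) • (b * c - c * b) + (q ^ 2 - 1) • (h * h) = 0)
    (br : Fin 3 → Fin 3 → A)
    (hbb : br 0 0 = 0)
    (hbh : br 0 1 = -(w • b))
    (hbc : br 0 2 = (w * (q / s)) • h)
    (hhb : br 1 0 = (w * q ^ 2) • b)
    (hhh : br 1 1 = (w * (q ^ 2 - 1)) • h)
    (hhc : br 1 2 = -(w • c))
    (hcb : br 2 0 = -((w * (q / s)) • h))
    (hch : br 2 1 = (w * q ^ 2) • c)
    (hcc : br 2 2 = 0) (j : Fin 3) :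
    tangentForm q s b h c (br 0 j) (br 1 j) (br 2 j) = 0 := by
  match j with
  | 0 => rw [hbb, hhb, hcb, tangentForm_bracket_b hq, r1, smul_zero]
  | 1 => rw [hbh, hhh, hch, tangentForm_bracket_h hq hs, r3, smul_zero]
  | 2 => rw [hbc, hhc, hcc, tangentForm_bracket_c, r2, smul_zero]

end TangentForm

/-- In the q-commutative algebra `K_q[ℝ³] = SL(R_q,0)` the braided Lie bracket of
`sl(2)_q` (encoded by the function `br` on the indices `0 ↦ b`, `1 ↦ h`, `2 ↦ c`)
satisfies, for each generator `x ∈ {b,h,c}`, the relation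
`q⁻¹·b·[c,x] + (1/2_q)·h·[h,x] + q·c·[b,x] = 0`. -/
theorem stmt_13 (K : Type*) [Field K] (q : K) (hq : q ≠ 0) (h2q : q + q⁻¹ ≠ 0)
    (w : K) (A : Type*) [Ring A] [Algebra K A] (b h c : A)
    (r1 : q ^ 2 • (h * b) - b * h = 0)
    (r2 : q ^ 2 • (c * h) - h * c = 0)
    (r3 : ((q + q⁻¹) * q) • (b * c - c * b) + (q ^ 2 - 1) • (h * h) = 0)
    (br : Fin 3 → Fin 3 → A)
    (hbb : br 0 0 = 0)
    (hbh : br 0 1 = -(w • b))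
    (hbc : br 0 2 = (w * (q / (q + q⁻¹))) • h)
    (hhb : br 1 0 = (w * q ^ 2) • b)
    (hhh : br 1 1 = (w * (q ^ 2 - 1)) • h)
    (hhc : br 1 2 = -(w • c))
    (hcb : br 2 0 = -((w * (q / (q + q⁻¹))) • h))
    (hch : br 2 1 = (w * q ^ 2) • c)
    (hcc : br 2 2 = 0) :
    ∀ j : Fin 3,
      q⁻¹ • (b * br 2 j) + (q + q⁻¹)⁻¹ • (h * br 1 j) + q • (c * br 0 j) = 0 :=
  stmt_13_general hq h2q w b h c r1 r2 r3 br hbb hbh hbc hhb hhh hhc hcb hch hcc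
end

section
/- Let K be a field, q ∈ K nonzero with 2_q := q + q⁻¹ ≠ 0, ε ∈ K, and let A be a unital associative K-algebra containing elements D_ℓ, D_b, D_h, D_c such that D_ℓ commutes with D_b, D_h, D_c and the relations hold: q²D_hD_b − D_bD_h = 0; q²D_cD_h − D_hD_c = 0; 2_q·q(D_bD_c − D_cD_b) + (q²−1)D_h² = 0. Then the 4×4 matrix over A, Dir = [[qD_h/2_q, D_b, εD_ℓ, 0],[D_c, −q⁻¹D_h/2_q, 0, εD_ℓ],[εD_ℓ, 0, −qD_h/2_q, −D_b],[0, εD_ℓ, −D_c, q⁻¹D_h/2_q]], satisfies Dir² = (ε²D_ℓ² + (1/2_q)(q⁻¹D_bD_c + D_h²/2_q + qD_cD_b))·I₄, where I₄ is the 4×4 identity matrix. -/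
/-!
The Dirac matrix has the block form `[[P, x], [x, -P]]` with `P` a `2 × 2` matrix and `x = ε D_ℓ` a
scalar commuting with the entries of `P`. The off-diagonal blocks of its square are therefore
`± (P x - x P) = 0`, and both diagonal blocks are `x² + P²`. It remains to see that `P²` is the
scalar `L = t (p D_b D_c + t D_h² + q D_c D_b)`, with `p = q⁻¹` and `t = 2_q⁻¹`: the relations with
`D_h` kill its off-diagonal entries, and its diagonal entries differ from `L` by the multiples
`t²` and `-p² t²` of the relation between `D_b` and `D_c`.
-/

section BlockMatrices

open Matrix

variable {n R : Type*} [Fintype n] [DecidableEq n] [Ring R]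

theorem commute_smul_one_of_forall_commute {M : Matrix n n R} {x : R}
    (hx : ∀ i j, Commute x (M i j)) : Commute (x • (1 : Matrix n n R)) M := by
  rw [smul_one_eq_diagonal, ← scalar_apply, scalar_commute_iff]
  ext i j
  exact hx i j

/-- The block matrix `[[M, x], [x, -M]]` with scalar off-diagonal blocks, which is the shape of a
Dirac operator with spatial part `M` and time part `x`. -/
def diracBlock (M : Matrix n n R) (x : R) : Matrix (n ⊕ n) (n ⊕ n) R :=
  fromBlocks M (x • 1) (x • 1) (-M)

theorem diracBlock_mul_self {M : Matrix n n R} {x y : R} (hx : ∀ i j, Commute x (M i j))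
    (hM : M * M = y • 1) : diracBlock M x * diracBlock M x = (x * x + y) • 1 := by
  have hxM : x • (1 : Matrix n n R) * M = M * x • 1 := commute_smul_one_of_forall_commute hx
  have hxx : x • (1 : Matrix n n R) * x • 1 = (x * x) • 1 := by
    rw [smul_mul_assoc, one_mul, smul_smul]
  rw [diracBlock, fromBlocks_multiply, ← fromBlocks_one, fromBlocks_smul, smul_zero]
  congr 1
  · rw [hM, hxx, add_smul, add_comm]
  · rw [mul_neg, hxM, add_neg_cancel]
  · rw [neg_mul, hxM, add_neg_cancel]
  · rw [neg_mul_neg, hM, hxx, add_smul]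

end BlockMatrices

section QPauli

variable {K A : Type*} [CommRing K] [Ring A] [Algebra K A] {q p t : K} {b h c : A}

/-- The matrix `b σ_b + h σ_h + c σ_c` in the q-Pauli matrices, where `p` stands for `q⁻¹` and `t`
for the inverse of the q-number `2_q = q + q⁻¹`. -/
def qPauli (q p t : K) (b h c : A) : Matrix (Fin 2) (Fin 2) A :=
  !![(q * t) • h, b; c, -((p * t) • h)]

theorem commute_qPauli_apply {x : A} (hb : Commute x b) (hh : Commute x h) (hc : Commute x c)
    (i j : Fin 2) : Commute x (qPauli q p t b h c i j) := by
  fin_cases i <;> fin_cases j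
  exacts [hh.smul_right _, hb, hc, (hh.smul_right _).neg_right]

/-- The spatial part of the q-Laplace operator, where `p` stands for `q⁻¹` and `t` for the inverse
of the q-number `2_q = q + q⁻¹`. -/
def spatialQLaplace (q p t : K) (b h c : A) : A :=
  t • (p • (b * c) + t • (h * h) + q • (c * b))

theorem smul_mul_eq_smul_mul_of_sq_smul_mul_eq {x y : A} (hqp : q * p = 1)
    (hxy : q ^ 2 • (x * y) = y * x) : (q * t) • (x * y) = (p * t) • (y * x) := by
  rw [← hxy, smul_smul]
  congr 1
  linear_combination (-q * t) * hqp

theorem sq_smul_add_mul_eq_spatialQLaplace (ht : (q + p) * t = 1)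
    (hbc : ((q + p) * q) • (b * c - c * b) + (q ^ 2 - 1) • (h * h) = 0) :
    (q * t) ^ 2 • (h * h) + b * c = spatialQLaplace q p t b h c := by
  rw [← sub_eq_zero, ← smul_zero (t ^ 2), ← hbc, spatialQLaplace]
  match_scalars
  · ring
  · linear_combination (-1 - q * t) * ht
  · linear_combination (q * t) * ht

theorem mul_add_sq_smul_eq_spatialQLaplace (hqp : q * p = 1) (ht : (q + p) * t = 1)
    (hbc : ((q + p) * q) • (b * c - c * b) + (q ^ 2 - 1) • (h * h) = 0) :
    c * b + (p * t) ^ 2 • (h * h) = spatialQLaplace q p t b h c := by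
  rw [← sub_eq_zero, ← smul_zero (-(p ^ 2 * t ^ 2)), ← hbc, spatialQLaplace]
  match_scalars
  · linear_combination (-1 - p * t) * ht - p * t ^ 2 * (q + p) * hqp
  · linear_combination t ^ 2 * (p * q + 1) * hqp
  · linear_combination p * t * ht + p * t ^ 2 * (q + p) * hqp

theorem qPauli_mul_self (hqp : q * p = 1) (ht : (q + p) * t = 1)
    (hhb : q ^ 2 • (h * b) = b * h) (hch : q ^ 2 • (c * h) = h * c)
    (hbc : ((q + p) * q) • (b * c - c * b) + (q ^ 2 - 1) • (h * h) = 0) :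
    qPauli q p t b h c * qPauli q p t b h c = spatialQLaplace q p t b h c • 1 := by
  have h00 := sq_smul_add_mul_eq_spatialQLaplace ht hbc
  have h01 := smul_mul_eq_smul_mul_of_sq_smul_mul_eq (t := t) hqp hhb
  have h10 := smul_mul_eq_smul_mul_of_sq_smul_mul_eq (t := t) hqp hch
  have h11 := mul_add_sq_smul_eq_spatialQLaplace hqp ht hbc
  rw [qPauli, Matrix.mul_fin_two, Matrix.smul_one_eq_diagonal, Matrix.diagonal_fin_two]
  simp only [mul_neg, neg_mul, smul_neg, neg_neg, smul_mul_assoc, mul_smul_comm, smul_smul,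
    ← sq (q * t), ← sq (p * t), h00, h01, h10, h11, add_neg_cancel]

end QPauli

theorem stmt_14_general {K A : Type*} [CommRing K] [Ring A] [Algebra K A] {q p t ε : K}
    (hqp : q * p = 1) (ht : (q + p) * t = 1) {Dl Db Dh Dc : A}
    (hlb : Commute Dl Db) (hlh : Commute Dl Dh) (hlc : Commute Dl Dc)
    (hhb : q ^ 2 • (Dh * Db) = Db * Dh) (hch : q ^ 2 • (Dc * Dh) = Dh * Dc)
    (hbc : ((q + p) * q) • (Db * Dc - Dc * Db) + (q ^ 2 - 1) • (Dh * Dh) = 0)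
    {Dir : Matrix (Fin 4) (Fin 4) A}
    (hDir : Dir = !![(q * t) • Dh, Db, ε • Dl, 0;
                     Dc, -((p * t) • Dh), 0, ε • Dl;
                     ε • Dl, 0, -((q * t) • Dh), -Db;
                     0, ε • Dl, -Dc, (p * t) • Dh]) :
    Dir * Dir =
      (ε ^ 2 • (Dl * Dl) + t • (p • (Db * Dc) + t • (Dh * Dh) + q • (Dc * Db))) •
      (1 : Matrix (Fin 4) (Fin 4) A) := by
  let e : Fin 4 ≃ Fin 2 ⊕ Fin 2 := (finSumFinEquiv (m := 2) (n := 2)).symm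
  have hblock : Dir = (diracBlock (qPauli q p t Db Dh Dc) (ε • Dl)).submatrix e e := by
    rw [hDir]
    ext i j
    fin_cases i <;> fin_cases j <;>
      simp [e, diracBlock, qPauli, finSumFinEquiv, Fin.addCases]
  have hcomm : ∀ i j, Commute (ε • Dl) (qPauli q p t Db Dh Dc i j) :=
    commute_qPauli_apply (hlb.smul_left ε) (hlh.smul_left ε) (hlc.smul_left ε)
  have hsq := diracBlock_mul_self hcomm (qPauli_mul_self hqp ht hhb hch hbc)
  rw [hblock, Matrix.submatrix_mul_equiv, hsq, smul_mul_smul_comm, ← sq ε, spatialQLaplace,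
    Matrix.submatrix_smul]
  simp only [Pi.smul_apply, Matrix.submatrix_one_equiv]

/-- The square of the q-Dirac operator on the q-Minkowski space algebra equals the
q-Laplace operator times the identity matrix. -/
theorem stmt_14 (K : Type*) [Field K] (q ε : K) (hq : q ≠ 0) (h2q : q + q⁻¹ ≠ 0)
    (A : Type*) [Ring A] [Algebra K A]
    (Dl Db Dh Dc : A)
    (c1 : Dl * Db = Db * Dl) (c2 : Dl * Dh = Dh * Dl) (c3 : Dl * Dc = Dc * Dl)
    (r1 : q ^ 2 • (Dh * Db) - Db * Dh = 0)
    (r2 : q ^ 2 • (Dc * Dh) - Dh * Dc = 0)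
    (r3 : ((q + q⁻¹) * q) • (Db * Dc - Dc * Db) + (q ^ 2 - 1) • (Dh * Dh) = 0)
    (Dir : Matrix (Fin 4) (Fin 4) A)
    (hDir : Dir = !![(q / (q + q⁻¹)) • Dh, Db, ε • Dl, 0;
                     Dc, -((q⁻¹ / (q + q⁻¹)) • Dh), 0, ε • Dl;
                     ε • Dl, 0, -((q / (q + q⁻¹)) • Dh), -Db;
                     0, ε • Dl, -Dc, (q⁻¹ / (q + q⁻¹)) • Dh]) :
    Dir * Dir =
      (ε ^ 2 • (Dl * Dl) +
        (q + q⁻¹)⁻¹ • (q⁻¹ • (Db * Dc) + (q + q⁻¹)⁻¹ • (Dh * Dh) + q • (Dc * Db))) •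
      (1 : Matrix (Fin 4) (Fin 4) A) :=
  stmt_14_general (mul_inv_cancel₀ hq) (mul_inv_cancel₀ h2q) c1 c2 c3
    (sub_eq_zero.mp r1) (sub_eq_zero.mp r2) r3 (by simpa only [div_eq_mul_inv] using hDir)
end

section
/- Let K be a field, q, ε ∈ K nonzero with 2_q := q + q⁻¹ ≠ 0. Let 𝓛 be the 4-dimensional K-vector space with basis ℓ, h, b, c, and let ⟨·,·⟩ : 𝓛 × 𝓛 → K be the bilinear form with ⟨b,c⟩ = q⁻¹, ⟨h,h⟩ = 2_q, ⟨c,b⟩ = q, ⟨ℓ,ℓ⟩ = ε⁻¹ and all other pairs of basis vectors pairing to 0. Extend it to 𝓛⊗𝓛 by ⟨x₁⊗x₂, y₁⊗y₂⟩₂ = ⟨x₂,y₁⟩·⟨x₁,y₂⟩. Let Ĩ₋ ⊂ 𝓛⊗𝓛 be the span of q²h⊗b − b⊗h, q²c⊗h − h⊗c, 2_q·q(b⊗c − c⊗b) + (q²−1)h⊗h, ℓ⊗b − b⊗ℓ, ℓ⊗h − h⊗ℓ, ℓ⊗c − c⊗ℓ, and let Ĩ₊ ⊂ 𝓛⊗𝓛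 be the span of q⁻¹b⊗c + (1/2_q)h⊗h + q·c⊗b, b⊗b, q²b⊗h + h⊗b, q³b⊗c − q·h⊗h + q⁻¹c⊗b, q²h⊗c + c⊗h, c⊗c, ℓ⊗b + b⊗ℓ, ℓ⊗h + h⊗ℓ, ℓ⊗c + c⊗ℓ, ℓ⊗ℓ. Then Ĩ₋ and Ĩ₊ are orthogonal to each other with respect to ⟨·,·⟩₂: ⟨u,v⟩₂ = 0 and ⟨v,u⟩₂ = 0 for all u ∈ Ĩ₋, v ∈ Ĩ₊. -/
noncomputable section

/-- The standard basis vectors `ℓ = e 0`, `h = e 1`, `b = e 2`, `c = e 3` of the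
4-dimensional space `𝓛 = (Fin 4 → K)`. -/
def genVec (K : Type*) [Field K] (i : Fin 4) : Fin 4 → K := Pi.single i 1

/-- The tensor product of two vectors of `𝓛`, realized in the canonical model
`𝓛 ⊗ 𝓛 ≅ (Fin 4 × Fin 4 → K)`, where `(u ⊗ v) (i, j) = u i * v j`. -/
def tens {K : Type*} [Field K] (u v : Fin 4 → K) : Fin 4 × Fin 4 → K :=
  fun p => u p.1 * v p.2

/-- The Gram matrix of the `U_q(sl(2))`-invariant pairing on `𝓛` in the basis
`ℓ, h, b, c`: `⟨ℓ,ℓ⟩ = ε⁻¹`, `⟨h,h⟩ = q + q⁻¹`, `⟨b,c⟩ = q⁻¹`, `⟨c,b⟩ = q`,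
all other pairs of basis vectors pairing to `0`. -/
def gram (K : Type*) [Field K] (q ε : K) : Matrix (Fin 4) (Fin 4) K :=
  !![ε⁻¹, 0, 0, 0;
     0, q + q⁻¹, 0, 0;
     0, 0, 0, q⁻¹;
     0, 0, q, 0]

/-- The extension of the pairing to `𝓛 ⊗ 𝓛` coupling the inner factors first:
on pure tensors `⟨x₁⊗x₂, y₁⊗y₂⟩₂ = ⟨x₂,y₁⟩·⟨x₁,y₂⟩`. -/
def pairing2 {K : Type*} [Field K] (q ε : K)
    (U V : Fin 4 × Fin 4 → K) : K :=
  ∑ i : Fin 4, ∑ j : Fin 4, ∑ k : Fin 4, ∑ l : Fin 4,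
    U (i, j) * V (k, l) * gram K q ε j k * gram K q ε i l

/-!
The Gram matrix has a single nonzero entry in each row, so pairing with `eᵢ ⊗ eⱼ` on the left
reads off one coordinate. Orthogonality to the generators of `Ĩ₋` thus becomes a short list of
linear equations on coordinates, which the generators of `Ĩ₊` satisfy.

The pairing is not symmetric, but `⟨x, y⟩ = ⟨y, D x⟩` with `D = diag(1, 1, q⁻², q²)`, hence
`⟨u, v⟩₂ = ⟨v, (D ⊗ D) u⟩₂`. Every generator of `Ĩ₋` is an eigenvector of `D ⊗ D` with nonzero
eigenvalue, so orthogonality on one side gives orthogonality on the other.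
-/

open scoped Kronecker

section BilinearForms

variable {R M : Type*} [CommRing R] [AddCommGroup M] [Module R M]

lemma bilin_eq_zero_of_mem_span (B : LinearMap.BilinForm R M) {S T : Set M}
    (hST : ∀ u ∈ S, ∀ v ∈ T, B u v = 0) {u v : M}
    (hu : u ∈ Submodule.span R S) (hv : v ∈ Submodule.span R T) : B u v = 0 := by
  have hle : Submodule.map₂ B (Submodule.span R S) (Submodule.span R T) ≤ ⊥ := by
    rw [Submodule.map₂_span_span, Submodule.span_le]
    rintro _ ⟨x, hx, y, hy, rfl⟩
    exact hST x hx y hy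
  exact Submodule.map₂_le.1 hle u hu v hv

variable {n : Type*}

/-- The `μ`-eigenspace of `D ⊗ D` on `Rⁿ ⊗ Rⁿ`, where `D` is the diagonal operator with
entries `d`. -/
def tensorWeightSpace (d : n → R) (μ : R) : Submodule R (n × n → R) :=
  Module.End.eigenspace (LinearMap.mulLeft R fun p : n × n => d p.1 * d p.2) μ

lemma mem_tensorWeightSpace {d : n → R} {μ : R} {U : n × n → R} :
    U ∈ tensorWeightSpace d μ ↔ ∀ p, d p.1 * d p.2 * U p = μ * U p := by
  simp [tensorWeightSpace, funext_iff]

variable [DecidableEq n]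

lemma single_mem_tensorWeightSpace {d : n → R} {μ : R} {i j : n} (hμ : d i * d j = μ) :
    Pi.single (i, j) 1 ∈ tensorWeightSpace d μ := by
  rw [mem_tensorWeightSpace]
  intro p
  by_cases hp : p = (i, j) <;> simp [hp, hμ]

variable [Fintype n]

/-- The bilinear form `⟨x₁ ⊗ x₂, y₁ ⊗ y₂⟩ = ⟨x₂, y₁⟩ ⟨x₁, y₂⟩` on `Rⁿ ⊗ Rⁿ`, modelled as
`n × n → R`, induced by the form on `Rⁿ` with Gram matrix `A`. -/
def nestedForm (A : Matrix n n R) : LinearMap.BilinForm R (n × n → R) :=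
  Matrix.toBilin' ((A ⊗ₖ A).submatrix Prod.swap id)

lemma nestedForm_apply (A : Matrix n n R) (U V : n × n → R) :
    nestedForm A U V = ∑ p, ∑ r, U p * (A p.2 r.1 * A p.1 r.2) * V r :=
  Matrix.toBilin'_apply _ _ _

lemma nestedForm_single_left_of_monomial {A : Matrix n n R} {w : n → R} {σ : n → n}
    (hA : ∀ i k, A i k = if k = σ i then w i else 0) (i j : n) (V : n × n → R) :
    nestedForm A (Pi.single (i, j) 1) V = w i * w j * V (σ j, σ i) := by
  simp [nestedForm_apply, hA, Pi.single_apply, Fintype.sum_prod_type, mul_comm (w i)]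

lemma nestedForm_eq_mul_flip {A : Matrix n n R} {d : n → R}
    (hA : ∀ i j, A i j = d i * A j i) {μ : R} {U : n × n → R}
    (hU : U ∈ tensorWeightSpace d μ) (V : n × n → R) :
    nestedForm A U V = μ * nestedForm A V U := by
  rw [nestedForm_apply, nestedForm_apply, Finset.sum_comm, Finset.mul_sum]
  refine Finset.sum_congr rfl fun r _ => ?_
  rw [Finset.mul_sum]
  refine Finset.sum_congr rfl fun p _ => ?_
  rw [hA p.2, hA p.1]
  linear_combination (A r.1 p.2 * A r.2 p.1 * V r) * mem_tensorWeightSpace.1 hU p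

end BilinearForms

section Minkowski

variable {K : Type*} [Field K] {q ε : K}

lemma pairing2_eq_nestedForm (q ε : K) (U V : Fin 4 × Fin 4 → K) :
    pairing2 q ε U V = nestedForm (gram K q ε) U V := by
  simp only [pairing2, nestedForm_apply, Fintype.sum_prod_type, mul_assoc, mul_comm (V _)]

lemma gram_apply_eq_ite (q ε : K) (i k : Fin 4) :
    gram K q ε i k =
      if k = ![0, 1, 3, 2] i then ![ε⁻¹, q + q⁻¹, q⁻¹, q] i else 0 := by
  fin_cases i <;> fin_cases k <;> simp [gram]

/-- The diagonal of the operator `D` on `𝓛` with `⟨x, y⟩ = ⟨y, D x⟩`. -/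
def gramTwist (q : K) : Fin 4 → K := ![1, 1, (q ^ 2)⁻¹, q ^ 2]

lemma gram_apply_eq_gramTwist_mul (hq : q ≠ 0) (ε : K) (i j : Fin 4) :
    gram K q ε i j = gramTwist q i * gram K q ε j i := by
  fin_cases i <;> fin_cases j <;> simp [gram, gramTwist] <;> field_simp

lemma tens_genVec (i j : Fin 4) :
    tens (genVec K i) (genVec K j) = Pi.single (i, j) 1 := by
  ext ⟨k, l⟩
  simp [tens, genVec, Pi.single_apply, ← ite_and, and_comm]

lemma nestedForm_tens_genVec_left (i j : Fin 4) (V : Fin 4 × Fin 4 → K) :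
    nestedForm (gram K q ε) (tens (genVec K i) (genVec K j)) V =
      ![ε⁻¹, q + q⁻¹, q⁻¹, q] i * ![ε⁻¹, q + q⁻¹, q⁻¹, q] j *
        V (![0, 1, 3, 2] j, ![0, 1, 3, 2] i) := by
  rw [tens_genVec, nestedForm_single_left_of_monomial (gram_apply_eq_ite q ε)]

/-- The generators of `Ĩ₋`, i.e. the defining relations of `K_q[ℝ⁴]`. -/
def minkowskiRelations (q : K) : Set (Fin 4 × Fin 4 → K) :=
  let ℓ := genVec K 0
  let h := genVec K 1
  let b := genVec K 2
  let c := genVec K 3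
  {q ^ 2 • tens h b - tens b h,
   q ^ 2 • tens c h - tens h c,
   ((q + q⁻¹) * q) • (tens b c - tens c b) + (q ^ 2 - 1) • tens h h,
   tens ℓ b - tens b ℓ,
   tens ℓ h - tens h ℓ,
   tens ℓ c - tens c ℓ}

/-- The generators of `Ĩ₊`, i.e. the defining relations of the q-skew-symmetric algebra. -/
def skewMinkowskiRelations (q : K) : Set (Fin 4 × Fin 4 → K) :=
  let ℓ := genVec K 0
  let h := genVec K 1
  let b := genVec K 2
  let c := genVec K 3
  {q⁻¹ • tens b c + (q + q⁻¹)⁻¹ • tens h h + q • tens c b,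
   tens b b,
   q ^ 2 • tens b h + tens h b,
   q ^ 3 • tens b c - q • tens h h + q⁻¹ • tens c b,
   q ^ 2 • tens h c + tens c h,
   tens c c,
   tens ℓ b + tens b ℓ,
   tens ℓ h + tens h ℓ,
   tens ℓ c + tens c ℓ,
   tens ℓ ℓ}

/-- The coordinate equations, in the basis `ℓ, h, b, c` numbered `0, 1, 2, 3`, that express
`⟨u, V⟩₂ = 0` for the generators `u` of `Ĩ₋`. -/
structure IsQSymmetric (q : K) (V : Fin 4 × Fin 4 → K) : Prop where
  ell_comm : ∀ i, V (0, i) = V (i, 0)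
  h_c : V (1, 3) = q ^ 2 * V (3, 1)
  b_h : V (2, 1) = q ^ 2 * V (1, 2)
  b_c_h : q * (V (2, 3) - V (3, 2)) + (q ^ 2 - 1) * (q + q⁻¹) * V (1, 1) = 0

lemma isQSymmetric_of_mem_skewMinkowskiRelations (hq : q ≠ 0) (h2q : q + q⁻¹ ≠ 0)
    {v : Fin 4 × Fin 4 → K} (hv : v ∈ skewMinkowskiRelations q) : IsQSymmetric q v := by
  simp only [skewMinkowskiRelations, tens_genVec, Set.mem_insert_iff,
    Set.mem_singleton_iff] at hv
  rcases hv with rfl | rfl | rfl | rfl | rfl | rfl | rfl | rfl | rfl | rfl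
  case inl =>
    refine ⟨fun i => by fin_cases i <;> simp, by simp, by simp, ?_⟩
    suffices q * (q⁻¹ - q) + (q ^ 2 - 1) = 0 by simpa [h2q]
    field_simp
    ring
  case inr.inr.inr.inl =>
    refine ⟨fun i => by fin_cases i <;> simp, by simp, by simp, ?_⟩
    suffices q * (q ^ 3 - q⁻¹) + (q ^ 2 - 1) * (q + q⁻¹) * -q = 0 by simpa
    field_simp
    ring
  all_goals exact ⟨fun i => by fin_cases i <;> simp, by simp, by simp, by simp⟩

lemma IsQSymmetric.nestedForm_eq_zero (hq : q ≠ 0) {u v : Fin 4 × Fin 4 → K}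
    (hv : IsQSymmetric q v) (hu : u ∈ minkowskiRelations q) :
    nestedForm (gram K q ε) u v = 0 := by
  simp only [minkowskiRelations, Set.mem_insert_iff, Set.mem_singleton_iff] at hu
  rcases hu with rfl | rfl | rfl | rfl | rfl | rfl <;>
    simp only [map_add, map_sub, map_smul, LinearMap.add_apply, LinearMap.sub_apply,
      LinearMap.smul_apply, smul_eq_mul, nestedForm_tens_genVec_left, Matrix.cons_val]
  · linear_combination (-(q + q⁻¹) * q⁻¹) * hv.h_c
  · linear_combination (-(q + q⁻¹) * q) * hv.b_h
  · linear_combination (q + q⁻¹) * hv.b_c_h +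
      (q + q⁻¹) * q * (v (2, 3) - v (3, 2)) * mul_inv_cancel₀ hq
  · linear_combination (-ε⁻¹ * q⁻¹) * hv.ell_comm 3
  · linear_combination (-ε⁻¹ * (q + q⁻¹)) * hv.ell_comm 1
  · linear_combination (-ε⁻¹ * q) * hv.ell_comm 2

lemma exists_mem_tensorWeightSpace_of_mem_minkowskiRelations (hq : q ≠ 0)
    {u : Fin 4 × Fin 4 → K} (hu : u ∈ minkowskiRelations q) :
    ∃ μ ≠ 0, u ∈ tensorWeightSpace (gramTwist q) μ := by
  have hq2 : q ^ 2 ≠ 0 := pow_ne_zero 2 hq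
  simp only [minkowskiRelations, tens_genVec, Set.mem_insert_iff, Set.mem_singleton_iff] at hu
  rcases hu with rfl | rfl | rfl | rfl | rfl | rfl
  · refine ⟨(q ^ 2)⁻¹, inv_ne_zero hq2, sub_mem (Submodule.smul_mem _ _ ?_) ?_⟩ <;>
      exact single_mem_tensorWeightSpace (by simp [gramTwist])
  · refine ⟨q ^ 2, hq2, sub_mem (Submodule.smul_mem _ _ ?_) ?_⟩ <;>
      exact single_mem_tensorWeightSpace (by simp [gramTwist])
  · refine ⟨1, one_ne_zero, add_mem (Submodule.smul_mem _ _ (sub_mem ?_ ?_))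
      (Submodule.smul_mem _ _ ?_)⟩ <;>
      exact single_mem_tensorWeightSpace (by simp [gramTwist, hq])
  · refine ⟨(q ^ 2)⁻¹, inv_ne_zero hq2, sub_mem ?_ ?_⟩ <;>
      exact single_mem_tensorWeightSpace (by simp [gramTwist])
  · refine ⟨1, one_ne_zero, sub_mem ?_ ?_⟩ <;>
      exact single_mem_tensorWeightSpace (by simp [gramTwist])
  · refine ⟨q ^ 2, hq2, sub_mem ?_ ?_⟩ <;>
      exact single_mem_tensorWeightSpace (by simp [gramTwist])

end Minkowski

/-- The subspaces `Ĩ₋` (defining relations of the q-Minkowski space algebra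
`K_q[ℝ⁴]`) and `Ĩ₊` (the complementary symmetric subspace) are orthogonal to each
other with respect to the extended invariant pairing. -/
theorem stmt_17 (K : Type*) [Field K] (q ε : K) (hq : q ≠ 0) (hε : ε ≠ 0)
    (h2q : q + q⁻¹ ≠ 0)
    (ℓ h b c : Fin 4 → K)
    (hℓ : ℓ = genVec K 0) (hh : h = genVec K 1)
    (hb : b = genVec K 2) (hc : c = genVec K 3)
    (Im Ip : Submodule K (Fin 4 × Fin 4 → K))
    (hIm : Im = Submodule.span K
      {q ^ 2 • tens h b - tens b h,
       q ^ 2 • tens c h - tens h c,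
       ((q + q⁻¹) * q) • (tens b c - tens c b) + (q ^ 2 - 1) • tens h h,
       tens ℓ b - tens b ℓ,
       tens ℓ h - tens h ℓ,
       tens ℓ c - tens c ℓ})
    (hIp : Ip = Submodule.span K
      {q⁻¹ • tens b c + (q + q⁻¹)⁻¹ • tens h h + q • tens c b,
       tens b b,
       q ^ 2 • tens b h + tens h b,
       q ^ 3 • tens b c - q • tens h h + q⁻¹ • tens c b,
       q ^ 2 • tens h c + tens c h,
       tens c c,
       tens ℓ b + tens b ℓ,
       tens ℓ h + tens h ℓ,
       tens ℓ c + tens c ℓ,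
       tens ℓ ℓ}) :
    ∀ u ∈ Im, ∀ v ∈ Ip, pairing2 q ε u v = 0 ∧ pairing2 q ε v u = 0 := by
  subst hℓ hh hb hc hIm hIp
  have relations_orthogonal : ∀ u ∈ minkowskiRelations q, ∀ v ∈ skewMinkowskiRelations q,
      nestedForm (gram K q ε) u v = 0 := fun u hu v hv =>
    (isQSymmetric_of_mem_skewMinkowskiRelations hq h2q hv).nestedForm_eq_zero hq hu
  have relations_orthogonal_flip : ∀ v ∈ skewMinkowskiRelations q, ∀ u ∈ minkowskiRelations q,
      nestedForm (gram K q ε) v u = 0 := by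
    intro v hv u hu
    obtain ⟨μ, hμ, hu_weight⟩ := exists_mem_tensorWeightSpace_of_mem_minkowskiRelations hq hu
    have hflip := nestedForm_eq_mul_flip (gram_apply_eq_gramTwist_mul hq ε) hu_weight v
    rw [relations_orthogonal u hu v hv, zero_eq_mul] at hflip
    exact hflip.resolve_left hμ
  intro u hu v hv
  rw [pairing2_eq_nestedForm, pairing2_eq_nestedForm]
  exact ⟨bilin_eq_zero_of_mem_span _ relations_orthogonal hu hv,
    bilin_eq_zero_of_mem_span _ relations_orthogonal_flip hv hu⟩

end
end

section
/- Let K be a field, q ∈ K nonzero with 2_q := q + q⁻¹ ≠ 0, ℏ ∈ K, and let A be a unital associative K-algebra with elements a, b, c, d. Set ℓ = q⁻¹a + qd and h = a − d. Then a,b,c,d satisfy the relations q·ab − q⁻¹·ba = ℏb; q·ca − q⁻¹·ac = ℏc; ad − da = 0; q(bc − cb) − (q−q⁻¹)a(d−a) = ℏ(a−d); q(cd − dc) − (q−q⁻¹)ca = −ℏc; q(db − bd) − (q−q⁻¹)ab = −ℏb, if and only if ℓ commutes with b, h, c and the relations q²hb − bh + (q−q⁻¹)ℓb = 2_qℏ·b;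 q²ch − hc + (q−q⁻¹)ℓc = 2_qℏ·c; 2_q·q(bc − cb) + (q²−1)h² + (q−q⁻¹)ℓh = 2_qℏ·h hold. -/
/-!
Write `p = q⁻¹`, so that `ℓ = p • a + q • d`, `h = a - d` and `ℓ + q • h = (q + p) • a`.
The commutator of `ℓ` with the raising generator `b` is the sum of the left-hand sides of the two
relations of `b` with `a` and `d`, while the left-hand side of the relation of `b` with `h` is
`q + p` times the first of these, up to a multiple of that commutator. The relations of the lowering
generator `c` are those of `b` read in the opposite algebra. In the two remaining relations, passing
from `a, d` to `ℓ, h` only multiplies by `±(q + p)`, which can be cancelled.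
-/

namespace ReflectionEquation

open MulOpposite

section Module

variable {R A : Type*} [CommRing R] [AddCommGroup A] [Module R A]

/-- The generator `ℓ = q⁻¹a + qd`, a multiple of the quantum trace of the matrix with rows `a, b`
and `c, d`. The parameter `p` stands for `q⁻¹`, so that `q` may lie in any commutative ring. -/
def qTrace (q p : R) (a d : A) : A :=
  p • a + q • d

theorem qTrace_add_smul_sub (q p : R) (a d : A) :
    qTrace q p a d + q • (a - d) = (q + p) • a := by
  unfold qTrace
  module

end Module

variable {R A : Type*} [CommRing R] [NonUnitalNonAssocRing A] [Module R A]
  [IsScalarTower R A A] {q p : R}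

theorem smul_sub_mul_sub_add_smul_qTrace_mul_sub (hqp : q * p = 1) (a d : A) :
    (q ^ 2 - 1) • ((a - d) * (a - d)) + (q - p) • (qTrace q p a d * (a - d)) =
      (q + p) • -((q - p) • (a * (d - a))) := by
  have hq : q ^ 2 - 1 = (q - p) * q := by linear_combination hqp
  calc
    _ = (q - p) • ((qTrace q p a d + q • (a - d)) * (a - d)) := by
      rw [hq, add_mul, smul_mul_assoc q, smul_add, mul_smul, add_comm]
    _ = (q - p) • (q + p) • (a * (a - d)) := by rw [qTrace_add_smul_sub, smul_mul_assoc]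
    _ = _ := by rw [← neg_sub d a, mul_neg, smul_comm, smul_neg (q - p)]

theorem raising_lowering_relation_iff (hqp : q * p = 1) (hreg : IsSMulRegular A (q + p))
    (ℏ : R) (a b c d : A) :
    ((q + p) * q) • (b * c - c * b) + (q ^ 2 - 1) • ((a - d) * (a - d)) +
        (q - p) • (qTrace q p a d * (a - d)) = ((q + p) * ℏ) • (a - d) ↔
      q • (b * c - c * b) - (q - p) • (a * (d - a)) = ℏ • (a - d) := by
  rw [add_assoc, smul_sub_mul_sub_add_smul_qTrace_mul_sub hqp, mul_smul, ← smul_add,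
    ← sub_eq_add_neg, mul_smul, hreg.eq_iff]

variable [SMulCommClass R A A]

theorem qTrace_mul_sub_mul_qTrace (q p : R) (a b d : A) :
    qTrace q p a d * b - b * qTrace q p a d =
      (q • (a * b) - p • (b * a)) + (q • (d * b - b * d) - (q - p) • (a * b)) := by
  simp only [qTrace, add_mul, mul_add, smul_mul_assoc, mul_smul_comm]
  module

theorem qTrace_mul_eq_mul_qTrace_iff {ℏ : R} {a b : A}
    (hab : q • (a * b) - p • (b * a) = ℏ • b) (d : A) :
    qTrace q p a d * b = b * qTrace q p a d ↔
      q • (d * b - b * d) - (q - p) • (a * b) = -(ℏ • b) := by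
  rw [← sub_eq_zero, qTrace_mul_sub_mul_qTrace, hab, add_comm, eq_neg_iff_add_eq_zero]

theorem sq_smul_sub_mul_add_smul_qTrace_mul (hqp : q * p = 1) (a b d : A) :
    q ^ 2 • ((a - d) * b) - b * (a - d) + (q - p) • (qTrace q p a d * b) =
      (q + p) • (q • (a * b) - p • (b * a)) -
        p • (qTrace q p a d * b - b * qTrace q p a d) := by
  simp only [qTrace, add_mul, mul_add, sub_mul, mul_sub, smul_mul_assoc, mul_smul_comm]
  match_scalars <;> grind

theorem raising_relation_iff_of_qTrace_mul_eq (hqp : q * p = 1)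
    (hreg : IsSMulRegular A (q + p)) {a b d : A}
    (hℓb : qTrace q p a d * b = b * qTrace q p a d) (ℏ : R) :
    q ^ 2 • ((a - d) * b) - b * (a - d) + (q - p) • (qTrace q p a d * b) = ((q + p) * ℏ) • b ↔
      q • (a * b) - p • (b * a) = ℏ • b := by
  rw [sq_smul_sub_mul_add_smul_qTrace_mul hqp, sub_eq_zero.mpr hℓb, smul_zero, sub_zero,
    mul_smul, hreg.eq_iff]

theorem raising_relations_iff (hqp : q * p = 1) (hreg : IsSMulRegular A (q + p))
    (ℏ : R) (a b d : A) :
    (q • (a * b) - p • (b * a) = ℏ • b ∧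
      q • (d * b - b * d) - (q - p) • (a * b) = -(ℏ • b)) ↔
    (qTrace q p a d * b = b * qTrace q p a d ∧
      q ^ 2 • ((a - d) * b) - b * (a - d) + (q - p) • (qTrace q p a d * b) =
        ((q + p) * ℏ) • b) := by
  rw [← and_congr_right fun hab => qTrace_mul_eq_mul_qTrace_iff hab d, and_comm,
    and_congr_right fun hℓb => raising_relation_iff_of_qTrace_mul_eq hqp hreg hℓb ℏ]

theorem lowering_relations_iff (hqp : q * p = 1) (hreg : IsSMulRegular A (q + p))
    (ℏ : R) (a c d : A) :
    (q • (c * a) - p • (a * c) = ℏ • c ∧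
      q • (c * d - d * c) - (q - p) • (c * a) = -(ℏ • c)) ↔
    (qTrace q p a d * c = c * qTrace q p a d ∧
      q ^ 2 • (c * (a - d)) - (a - d) * c + (q - p) • (qTrace q p a d * c) =
        ((q + p) * ℏ) • c) := by
  have hreg_op : IsSMulRegular Aᵐᵒᵖ (q + p) := fun _ _ hxy =>
    unop_injective (hreg (congrArg unop hxy))
  have h_op := raising_relations_iff hqp hreg_op ℏ (op a) (op c) (op d)
  simp only [qTrace, ← op_mul, ← op_smul, ← op_sub, ← op_add, ← op_neg, op_inj] at h_op
  rw [h_op, eq_comm]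
  exact and_congr_right fun hℓc => by rw [qTrace, hℓc]

theorem qTrace_mul_sub_eq_sub_mul_qTrace_iff (hreg : IsSMulRegular A (q + p)) (a d : A) :
    qTrace q p a d * (a - d) = (a - d) * qTrace q p a d ↔ a * d - d * a = 0 := by
  have hcomm : qTrace q p a d * (a - d) - (a - d) * qTrace q p a d =
      -((q + p) • (a * d - d * a)) := by
    simp only [qTrace, add_mul, mul_add, sub_mul, mul_sub, smul_mul_assoc, mul_smul_comm]
    module
  rw [← sub_eq_zero, hcomm, neg_eq_zero, ← smul_zero (q + p), hreg.eq_iff, smul_zero]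

end ReflectionEquation

open ReflectionEquation in
theorem stmt_18_general {R A : Type*} [CommRing R] [NonUnitalNonAssocRing A] [Module R A]
    [IsScalarTower R A A] [SMulCommClass R A A] {q p : R} (hqp : q * p = 1)
    (hreg : IsSMulRegular A (q + p)) (ℏ : R) (a b c d : A)
    {ℓ h : A} (hℓ : ℓ = p • a + q • d) (hh : h = a - d) :
    (q • (a * b) - p • (b * a) = ℏ • b ∧
     q • (c * a) - p • (a * c) = ℏ • c ∧
     a * d - d * a = 0 ∧
     q • (b * c - c * b) - (q - p) • (a * (d - a)) = ℏ • (a - d) ∧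
     q • (c * d - d * c) - (q - p) • (c * a) = -(ℏ • c) ∧
     q • (d * b - b * d) - (q - p) • (a * b) = -(ℏ • b)) ↔
    (ℓ * b = b * ℓ ∧ ℓ * h = h * ℓ ∧ ℓ * c = c * ℓ ∧
     q ^ 2 • (h * b) - b * h + (q - p) • (ℓ * b) = ((q + p) * ℏ) • b ∧
     q ^ 2 • (c * h) - h * c + (q - p) • (ℓ * c) = ((q + p) * ℏ) • c ∧
     ((q + p) * q) • (b * c - c * b) + (q ^ 2 - 1) • (h * h) +
       (q - p) • (ℓ * h) = ((q + p) * ℏ) • h) := by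
  obtain rfl : ℓ = qTrace q p a d := hℓ
  subst hh
  rw [qTrace_mul_sub_eq_sub_mul_qTrace_iff hreg, raising_lowering_relation_iff hqp hreg]
  have hb := raising_relations_iff hqp hreg ℏ a b d
  have hc := lowering_relations_iff hqp hreg ℏ a c d
  tauto

/-- Equivalence of the two presentations of the modified reflection equation algebra
`𝓛(R_q,ℏ)` (standard `SL(2)` case): in the generators `a,b,c,d` and in the
generators `ℓ = q⁻¹a + qd`, `h = a − d`, `b`, `c`. -/
theorem stmt_18 (K : Type*) [Field K] (q ℏ : K) (hq : q ≠ 0) (h2q : q + q⁻¹ ≠ 0)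
    (A : Type*) [Ring A] [Algebra K A] (a b c d : A)
    (ℓ h : A) (hℓ : ℓ = q⁻¹ • a + q • d) (hh : h = a - d) :
    (q • (a * b) - q⁻¹ • (b * a) = ℏ • b ∧
     q • (c * a) - q⁻¹ • (a * c) = ℏ • c ∧
     a * d - d * a = 0 ∧
     q • (b * c - c * b) - (q - q⁻¹) • (a * (d - a)) = ℏ • (a - d) ∧
     q • (c * d - d * c) - (q - q⁻¹) • (c * a) = -(ℏ • c) ∧
     q • (d * b - b * d) - (q - q⁻¹) • (a * b) = -(ℏ • b)) ↔
    (ℓ * b = b * ℓ ∧ ℓ * h = h * ℓ ∧ ℓ * c = c * ℓ ∧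
     q ^ 2 • (h * b) - b * h + (q - q⁻¹) • (ℓ * b) = ((q + q⁻¹) * ℏ) • b ∧
     q ^ 2 • (c * h) - h * c + (q - q⁻¹) • (ℓ * c) = ((q + q⁻¹) * ℏ) • c ∧
     ((q + q⁻¹) * q) • (b * c - c * b) + (q ^ 2 - 1) • (h * h) +
       (q - q⁻¹) • (ℓ * h) = ((q + q⁻¹) * ℏ) • h) :=
  stmt_18_general (mul_inv_cancel₀ hq) (.of_ne_zero h2q) ℏ a b c d hℓ hh
end
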